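/- arXiv:2307.16263 — 2 statements merged into one kernel-verified Lean document; each statement's English description precedes it below -/
import Mathlib

section
/- Let (G,C) be a strongly connected inhomogeneous Mauldin–Williams graph in ℝ^d satisfying the SCOSC such that ∫₀^∞ e^{−s₀(G)t} N_{e^{−t}}(C_i) dt = ∞ for some i ∈ V. Then lim_{t→∞} N_{e^{−t}}(K_j^C) / e^{s₀(G)t} = ∞ for every j ∈ V. -/
open Set Filter Topology MeasureTheory Metric

noncomputable section

/-- Points of `ℝ^d`. -/
abbrev Pt (d : ℕ) := EuclideanSpace ℝ (Fin d)

/-- The `r`-covering number of `A ⊆ ℝ^d`: the least number of closed balls of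
radius `r` needed to cover `A`. -/
noncomputable def coveringNumber {d : ℕ} (A : Set (Pt d)) (r : ℝ) : ℕ :=
  sInf {k : ℕ | ∃ c : Fin k → Pt d, A ⊆ ⋃ i, Metric.closedBall (c i) r}

/-- A Mauldin–Williams graph in `ℝ^d` over a finite directed multigraph with
vertex type `V` and edge type `E`: each vertex `i` carries a non-empty compact
set `X i` equal to the closure of its interior, and each edge `e` carries a
contractive similarity `S e` of ratio `r e ∈ (0,1)` mapping `X (term e)` into
`X (init e)`. -/
structure MWGraph (d : ℕ) (V E : Type) [Fintype V] [Fintype E] where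
  init : E → V
  term : E → V
  X : V → Set (Pt d)
  S : E → Pt d → Pt d
  r : E → ℝ
  X_nonempty : ∀ i, (X i).Nonempty
  X_compact : ∀ i, IsCompact (X i)
  X_regular : ∀ i, closure (interior (X i)) = X i
  r_pos : ∀ e, 0 < r e
  r_lt_one : ∀ e, r e < 1
  S_maps : ∀ e, Set.MapsTo (S e) (X (term e)) (X (init e))
  S_sim : ∀ e x y, dist (S e x) (S e y) = r e * dist x y

namespace MWGraph

variable {d : ℕ} {V E : Type} [Fintype V] [Fintype E]

variable (G : MWGraph d V E)

/-- `G.IsPathFrom j γ` holds iff the list of edges `γ` is a directed path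
starting at vertex `j`. -/
def IsPathFrom : V → List E → Prop
  | _, [] => True
  | j, e :: es => G.init e = j ∧ IsPathFrom (G.term e) es

/-- Terminal vertex of the path `γ` starting at `j`. -/
def pathTerm : V → List E → V
  | j, [] => j
  | _, e :: es => pathTerm (G.term e) es

/-- `S_γ = S_{e₁} ∘ ⋯ ∘ S_{eₙ}` (with `S_∅ = id`). -/
def pathMap : List E → Pt d → Pt d
  | [] => id
  | e :: es => G.S e ∘ pathMap es

/-- `r_γ = r_{e₁} ⋯ r_{eₙ}` (with `r_∅ = 1`). -/
def pathRatio (γ : List E) : ℝ := (γ.map G.r).prod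

/-- The underlying multigraph is strongly connected: for every ordered pair of
vertices there is a (non-empty) directed path from the first to the second. -/
def StronglyConnected : Prop :=
  ∀ i j : V, ∃ γ : List E, γ ≠ [] ∧ G.IsPathFrom i γ ∧ G.pathTerm i γ = j

/-- `K` is the list of graph-directed self-similar sets of `G`: the unique list
of non-empty compact sets with `K i = ⋃_{e ∈ E_i} S_e (K (term e))`. -/
def IsAttractor (K : V → Set (Pt d)) : Prop :=
  (∀ i, IsCompact (K i)) ∧ (∀ i, (K i).Nonempty) ∧
    ∀ i, K i = ⋃ e ∈ {e : E | G.init e = i}, G.S e '' K (G.term e)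

/-- `C` is an admissible list of condensation sets: compact subsets of the `X i`. -/
def IsCondensation (C : V → Set (Pt d)) : Prop :=
  ∀ i, IsCompact (C i) ∧ C i ⊆ G.X i

/-- `K` is the list of inhomogeneous graph-directed self-similar sets of `(G, C)`:
the unique list of non-empty compact sets with
`K i = ⋃_{e ∈ E_i} S_e (K (term e)) ∪ C i`. -/
def IsInhomAttractor (C : V → Set (Pt d)) (K : V → Set (Pt d)) : Prop :=
  (∀ i, IsCompact (K i)) ∧ (∀ i, (K i).Nonempty) ∧
    ∀ i, K i = (⋃ e ∈ {e : E | G.init e = i}, G.S e '' K (G.term e)) ∪ C i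

/-- `G` satisfies the open set condition with the open sets `U`. -/
def IsOSCWith (U : V → Set (Pt d)) : Prop :=
  (∀ i, (U i).Nonempty) ∧ (∀ i, IsOpen (U i)) ∧ (∀ i, Bornology.IsBounded (U i)) ∧
    (∀ i, U i ⊆ G.X i) ∧
    (∀ i, (⋃ e ∈ {e : E | G.init e = i}, G.S e '' U (G.term e)) ⊆ U i) ∧
    ∀ e e' : E, G.init e = G.init e' → e ≠ e' →
      Disjoint (G.S e '' U (G.term e)) (G.S e' '' U (G.term e'))

/-- The set `{-log r_γ : γ a directed cycle of G}`. -/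
def cycleSet : Set ℝ :=
  {x : ℝ | ∃ (j : V) (γ : List E), γ ≠ [] ∧ G.IsPathFrom j γ ∧ G.pathTerm j γ = j ∧
    x = -Real.log (G.pathRatio γ)}

/-- `G_M`, the smallest closed additive subgroup of `ℝ` containing
`{-log r_γ : γ a directed cycle}`. -/
def GM : Set ℝ := closure ((AddSubgroup.closure (G.cycleSet) : AddSubgroup ℝ) : Set ℝ)

variable [DecidableEq V]

/-- The matrix `A_G^s` with entries `(A_G^s)_{ij} = Σ_{e ∈ E_{ij}} r_e^s`. -/
def Amatrix (s : ℝ) : Matrix V V ℝ :=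
  Matrix.of fun i j => ∑ e : E, if G.init e = i ∧ G.term e = j then G.r e ^ s else 0

end MWGraph

/-- Spectral radius of a real square matrix: the largest modulus of a complex
eigenvalue. -/
noncomputable def matrixSpectralRadius {n : Type} [Fintype n] [DecidableEq n]
    (A : Matrix n n ℝ) : ℝ :=
  sSup {x : ℝ | ∃ μ : ℂ, μ ∈ spectrum ℂ (A.map (fun a : ℝ => (a : ℂ))) ∧ x = ‖μ‖}

/-- `s` is the (unique) exponent `s ≥ 0` with `ρ(A_G^s) = 1`, i.e. `s = s₀(G)`. -/
def IsS0 {d : ℕ} {V E : Type} [Fintype V] [Fintype E] [DecidableEq V]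
    (G : MWGraph d V E) (s : ℝ) : Prop :=
  0 ≤ s ∧ matrixSpectralRadius (G.Amatrix s) = 1

/-!
The moduli of an eigenvector for an eigenvalue of maximal modulus give a non-zero weight `w ≤ 1`
with `w ≤ A w`, where `A = A_G^{s₀}`. Stopping the paths from a vertex `j` when their ratio drops
to `u` gives an antichain of paths whose ratios are comparable to `u`; iterating `w ≤ A w` along
it shows that it contains at least `w j * u ^ (-s₀)` paths. Prolong each of these paths, within
a bounded number of edges, to one ending at the vertex `i` whose condensation set has infinite
integral, in such a way that the resulting copy of `C i` lies well inside the image of the open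
set belonging to the original path. Since a copy of a condensation set avoids the images of the
open sets under all paths of which its own path is not a prolongation, the copies obtained for
all scales `u` in a geometric progression are `2 r`-separated as long as `u` exceeds a multiple
of `r`, so the sum of their covering numbers at radius `r` bounds that of `K_j^C` from below.
This sum is `r ^ (-s₀)` times a partial sum of a series comparable to the divergent integral.
The argument applies where `w j > 0`, and strong connectivity spreads the conclusion to all
vertices.
-/

section Similarity

variable {F : Type*} {f : F → F} {r : ℝ}

lemma injective_of_dist_eq_mul [MetricSpace F] (hr : 0 < r)
    (hf : ∀ x y, dist (f x) (f y) = r * dist x y) : Function.Injective f :=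
  fun x y hxy => by simpa [hxy, hr.ne'] using hf x y

lemma continuous_of_dist_eq_mul [PseudoMetricSpace F] (hr : 0 ≤ r)
    (hf : ∀ x y, dist (f x) (f y) = r * dist x y) : Continuous f :=
  (LipschitzWith.of_dist_le_mul (K := ⟨r, hr⟩) fun x y => (hf x y).le).continuous

variable [NormedAddCommGroup F] [NormedSpace ℝ F] [StrictConvexSpace ℝ F] [FiniteDimensional ℝ F]

lemma surjective_of_dist_eq_mul (hr : 0 < r) (hf : ∀ x y, dist (f x) (f y) = r * dist x y) :
    Function.Surjective f := by
  have hiso : Isometry fun x => r⁻¹ • f x := by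
    refine Isometry.of_dist_eq fun x y => ?_
    rw [dist_smul₀, hf, Real.norm_of_nonneg (inv_nonneg.2 hr.le), inv_mul_cancel_left₀ hr.ne']
  let φ := hiso.affineIsometryOfStrictConvexSpace
  have hlinear : Function.Surjective φ.toAffineMap.linear :=
    LinearMap.injective_iff_surjective.1 (φ.toAffineMap.linear_injective_iff.2 hiso.injective)
  intro y
  obtain ⟨x, hx⟩ := φ.toAffineMap.linear_surjective_iff.1 hlinear (r⁻¹ • y)
  exact ⟨x, smul_right_injective F (inv_ne_zero hr.ne') hx⟩

lemma image_ball_of_dist_eq_mul (hr : 0 < r) (hf : ∀ x y, dist (f x) (f y) = r * dist x y)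
    (x : F) (ρ : ℝ) : f '' ball x ρ = ball (f x) (r * ρ) := by
  ext z
  obtain ⟨y, rfl⟩ := surjective_of_dist_eq_mul hr hf z
  rw [(injective_of_dist_eq_mul hr hf).mem_set_image, mem_ball, mem_ball, hf,
    mul_lt_mul_iff_right₀ hr]

lemma isOpenMap_of_dist_eq_mul (hr : 0 < r) (hf : ∀ x y, dist (f x) (f y) = r * dist x y) :
    IsOpenMap f := by
  refine IsOpenMap.of_nhds_le fun x => ?_
  rw [(nhds_basis_ball.map f).ge_iff]
  intro ε hε
  rw [image_ball_of_dist_eq_mul hr hf]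
  exact ball_mem_nhds _ (mul_pos hr hε)

end Similarity

section CoveringNumber

variable {d : ℕ} {A B : Set (Pt d)} {r r' : ℝ}

lemma coveringNumber_le_card {ι : Type*} [Fintype ι] {c : ι → Pt d}
    (h : A ⊆ ⋃ i, closedBall (c i) r) : coveringNumber A r ≤ Fintype.card ι :=
  Nat.sInf_le ⟨c ∘ (Fintype.equivFin ι).symm,
    h.trans ((Fintype.equivFin ι).symm.surjective.iUnion_comp fun i => closedBall (c i) r).ge⟩

lemma exists_cover_of_isCompact (hA : IsCompact A) (hr : 0 < r) :
    ∃ c : Fin (coveringNumber A r) → Pt d, A ⊆ ⋃ i, closedBall (c i) r := by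
  refine Nat.sInf_mem (s := {k : ℕ | ∃ c : Fin k → Pt d, A ⊆ ⋃ i, closedBall (c i) r}) ?_
  obtain ⟨t, -, ht, hcov⟩ := hA.finite_cover_balls hr
  obtain ⟨n, c, -, rfl⟩ := ht.fin_param
  rw [biUnion_range] at hcov
  exact ⟨n, c, hcov.trans (iUnion_mono fun i => ball_subset_closedBall)⟩

lemma coveringNumber_le_of_le (hA : IsCompact A) (hr : 0 < r) (h : r ≤ r') :
    coveringNumber A r' ≤ coveringNumber A r := by
  obtain ⟨c, hc⟩ := exists_cover_of_isCompact hA hr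
  exact Nat.sInf_le ⟨c, hc.trans (iUnion_mono fun i => closedBall_subset_closedBall h)⟩

lemma coveringNumber_div_le_of_image_subset {f : Pt d → Pt d} (hr : 0 < r)
    (hf : ∀ x y, dist (f x) (f y) = r * dist x y) (hB : IsCompact B) (hAB : f '' A ⊆ B) {ρ : ℝ}
    (hρ : 0 < ρ) : coveringNumber A (ρ / r) ≤ coveringNumber B ρ := by
  obtain ⟨c, hc⟩ := exists_cover_of_isCompact hB hρ
  choose g hg using surjective_of_dist_eq_mul hr hf
  refine Nat.sInf_le ⟨g ∘ c, fun x hx => ?_⟩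
  obtain ⟨i, hi⟩ := mem_iUnion.1 (hc (hAB (mem_image_of_mem f hx)))
  refine mem_iUnion.2 ⟨i, ?_⟩
  rwa [mem_closedBall, le_div_iff₀' hr, ← hf, Function.comp_apply, hg]

lemma sum_coveringNumber_le {ι : Type*} {t : Finset ι} {A : ι → Set (Pt d)} (hB : IsCompact B)
    (hr : 0 < r) (hAB : ∀ i ∈ t, A i ⊆ B)
    (hsep : (t : Set ι).Pairwise fun i j => ∀ x ∈ A i, ∀ y ∈ A j, 2 * r < dist x y) :
    ∑ i ∈ t, coveringNumber (A i) r ≤ coveringNumber B r := by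
  classical
  obtain ⟨c, hc⟩ := exists_cover_of_isCompact hB hr
  let J : ι → Finset (Fin (coveringNumber B r)) :=
    fun i => {k | (closedBall (c k) r ∩ A i).Nonempty}
  have hle : ∀ i ∈ t, coveringNumber (A i) r ≤ (J i).card := by
    intro i hi
    rw [← Fintype.card_coe]
    refine coveringNumber_le_card (c := fun k : J i => c k) fun x hx => ?_
    obtain ⟨k, hk⟩ := mem_iUnion.1 (hc (hAB i hi hx))
    exact mem_iUnion.2 ⟨⟨k, Finset.mem_filter.2 ⟨Finset.mem_univ k, x, hk, hx⟩⟩, hk⟩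
  have hdisj : (t : Set ι).PairwiseDisjoint J := by
    refine fun i hi j hj hij => Finset.disjoint_left.2 fun k hki hkj => ?_
    obtain ⟨x, hxk, hx⟩ := (Finset.mem_filter.1 hki).2
    obtain ⟨y, hyk, hy⟩ := (Finset.mem_filter.1 hkj).2
    have hfar := hsep hi hj hij x hx y hy
    have hnear := dist_triangle_right x y (c k)
    rw [mem_closedBall] at hxk hyk
    linarith
  calc ∑ i ∈ t, coveringNumber (A i) r ≤ ∑ i ∈ t, (J i).card := Finset.sum_le_sum hle
    _ = (t.biUnion J).card := (Finset.card_biUnion hdisj).symm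
    _ ≤ coveringNumber B r := (Finset.card_le_univ _).trans (Fintype.card_fin _).le

end CoveringNumber

section GeometricScales

lemma setLIntegral_Ioi_zero_le_tsum {g : ℝ → ENNReal} {b : ℕ → ENNReal} {l : ℝ} (hl : 0 < l)
    (hg : ∀ n : ℕ, ∀ t ∈ Ioc (n * l) ((n + 1) * l), g t ≤ b n) :
    ∫⁻ t in Ioi 0, g t ≤ (∑' n, b n) * ENNReal.ofReal l := by
  have hunbounded : ¬BddAbove (range fun n : ℕ => n * l) :=
    not_bddAbove_of_tendsto_atTop (tendsto_natCast_atTop_atTop.atTop_mul_const hl)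
  have hcover : Ioi (0 : ℝ) = ⋃ n : ℕ, Ioc (n * l) ((n + 1) * l) := by
    simpa using (iUnion_Ioc_map_succ_eq_Ioi
      (fun n => mul_le_mul_of_nonneg_right (Nat.cast_le.2 bot_le) hl.le) hunbounded).symm
  calc ∫⁻ t in Ioi 0, g t
      ≤ ∑' n : ℕ, ∫⁻ t in Ioc (n * l) ((n + 1) * l), g t := by
        rw [hcover]
        exact lintegral_iUnion_le _ _
    _ ≤ ∑' n : ℕ, b n * ENNReal.ofReal l := by
        refine ENNReal.tsum_le_tsum fun n => ?_
        refine (setLIntegral_mono' measurableSet_Ioc (hg n)).trans_eq ?_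
        rw [setLIntegral_const, Real.volume_Ioc, ← sub_mul, add_sub_cancel_left, one_mul]
    _ = (∑' n, b n) * ENNReal.ofReal l := ENNReal.tsum_mul_right

lemma not_summable_of_lintegral_eq_top {N : ℝ → ℝ} (hN0 : 0 ≤ N) (hN : AntitoneOn N (Ioi 0))
    {s a : ℝ} (hs : 0 ≤ s) (ha0 : 0 < a) (ha1 : a < 1)
    (hint : ∫⁻ t in Ioi (0 : ℝ), ENNReal.ofReal (Real.exp (-s * t) * N (Real.exp (-t))) = ⊤) :
    ¬Summable fun n : ℕ => (a ^ (n + 1)) ^ s * N (a ^ (n + 1)) := by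
  intro hsum
  have hl : 0 < -Real.log a := neg_pos.2 (Real.log_neg ha0 ha1)
  have hexp : ∀ n : ℕ, a ^ n = Real.exp (-(n * -Real.log a)) := fun n => by
    rw [mul_neg, neg_neg, Real.exp_nat_mul, Real.exp_log ha0]
  have hpiece : ∀ n : ℕ, ∀ t ∈ Ioc (n * -Real.log a) ((n + 1) * -Real.log a),
      Real.exp (-s * t) * N (Real.exp (-t)) ≤ (a ^ n) ^ s * N (a ^ (n + 1)) := by
    intro n t ht
    have hupper : Real.exp (-t) ≤ a ^ n := by
      rw [hexp, Real.exp_le_exp]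
      exact neg_le_neg ht.1.le
    have hlower : a ^ (n + 1) ≤ Real.exp (-t) := by
      rw [hexp, Real.exp_le_exp]
      exact neg_le_neg (by exact_mod_cast ht.2)
    rw [neg_mul_comm, mul_comm s, Real.exp_mul]
    exact mul_le_mul (Real.rpow_le_rpow (Real.exp_pos _).le hupper hs)
      (hN (pow_pos ha0 _) (Real.exp_pos _) hlower) (hN0 _) (by positivity)
  have hsum' : Summable fun n : ℕ => (a ^ n) ^ s * N (a ^ (n + 1)) := by
    refine (hsum.mul_left (a ^ s)⁻¹).congr fun n => ?_
    rw [pow_succ, Real.mul_rpow (by positivity) ha0.le, mul_comm ((a ^ n) ^ s), mul_assoc,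
      inv_mul_cancel_left₀ (Real.rpow_pos_of_pos ha0 s).ne']
  have hle := setLIntegral_Ioi_zero_le_tsum hl
    fun n t ht => ENNReal.ofReal_le_ofReal (hpiece n t ht)
  rw [hint, top_le_iff] at hle
  exact (ENNReal.mul_lt_top hsum'.tsum_ofReal_lt_top ENNReal.ofReal_lt_top).ne hle

lemma tendsto_div_exp_of_tendsto_rpow_mul {f : ℝ → ℝ} {s : ℝ}
    (h : Tendsto (fun r : ℝ => r ^ s * f r) (𝓝[>] 0) atTop) :
    Tendsto (fun t : ℝ => f (Real.exp (-t)) / Real.exp (s * t)) atTop atTop := by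
  have hexp : Tendsto (fun t => Real.exp (-t)) atTop (𝓝[>] 0) :=
    tendsto_nhdsWithin_iff.2
      ⟨Real.tendsto_exp_neg_atTop_nhds_zero, Eventually.of_forall fun t => Real.exp_pos _⟩
  refine (h.comp hexp).congr fun t => ?_
  rw [Function.comp_apply, ← Real.exp_mul, neg_mul, mul_comm t, Real.exp_neg, inv_mul_eq_div]

end GeometricScales

section SpectralRadius

variable {n : Type} [Fintype n] [DecidableEq n]

lemma exists_eigenvalue_norm_eq_matrixSpectralRadius [Nonempty n] (A : Matrix n n ℝ) :
    ∃ μ : ℂ, Module.End.HasEigenvalue (Matrix.toLin' (A.map (fun a : ℝ => (a : ℂ)))) μ ∧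
      ‖μ‖ = matrixSpectralRadius A := by
  set M := A.map (fun a : ℝ => (a : ℂ)) with hM
  have hradius : matrixSpectralRadius A = sSup (norm '' spectrum ℂ M) := by
    simp only [matrixSpectralRadius, image, eq_comm, hM]
  have hne := spectrum.nonempty_of_isAlgClosed_of_finiteDimensional ℂ M
  obtain ⟨μ, hμ, hμnorm⟩ := (hne.image norm).csSup_mem (M.finite_spectrum.image norm)
  refine ⟨μ, ?_, hμnorm.trans hradius.symm⟩
  rwa [Module.End.hasEigenvalue_iff_mem_spectrum, Matrix.spectrum_toLin']

-- The vector of moduli of a complex eigenvector for an eigenvalue of maximal modulus works.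
lemma exists_matrixSpectralRadius_smul_le_mulVec [Nonempty n] {A : Matrix n n ℝ}
    (hA : ∀ i j, 0 ≤ A i j) :
    ∃ w : n → ℝ, w ≤ 1 ∧ (∃ j, 0 < w j) ∧ matrixSpectralRadius A • w ≤ A.mulVec w := by
  obtain ⟨μ, hμ, hμnorm⟩ := exists_eigenvalue_norm_eq_matrixSpectralRadius A
  obtain ⟨z, hz⟩ := hμ.exists_hasEigenvector
  have hz0 : 0 < ‖z‖ := norm_pos_iff.2 hz.2
  obtain ⟨j, hj⟩ := Function.ne_iff.1 hz.2
  have hle : ∀ i, matrixSpectralRadius A * ‖z i‖ ≤ ∑ k, A i k * ‖z k‖ := by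
    intro i
    have heq : ∑ k, (A i k : ℂ) * z k = μ * z i := congrFun hz.apply_eq_smul i
    rw [← hμnorm, ← norm_mul, ← heq]
    refine (norm_sum_le _ _).trans_eq (Finset.sum_congr rfl fun k _ => ?_)
    rw [norm_mul, Complex.norm_of_nonneg (hA i k)]
  refine ⟨fun k => ‖z k‖ / ‖z‖, fun k => div_le_one_of_le₀ (norm_le_pi_norm z k) hz0.le,
    ⟨j, div_pos (norm_pos_iff.2 hj) hz0⟩, fun i => ?_⟩
  simp only [Pi.smul_apply, smul_eq_mul, Matrix.mulVec, dotProduct, ← mul_div_assoc,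
    ← Finset.sum_div]
  exact div_le_div_of_nonneg_right (hle i) hz0.le

end SpectralRadius

section ConsEmbedding

variable {α : Type*}

/-- The map `(a, l) ↦ a :: l` as an embedding, used to enumerate paths by their first edge. -/
def sigmaConsEmbedding : (_ : α) × List α ↪ List α where
  toFun x := x.1 :: x.2
  inj' _ _ h := Sigma.ext (List.cons.inj h).1 (heq_of_eq (List.cons.inj h).2)

@[simp]
lemma sigmaConsEmbedding_mk (a : α) (l : List α) : sigmaConsEmbedding ⟨a, l⟩ = a :: l := rfl

end ConsEmbedding

namespace MWGraph

variable {d : ℕ} {V E : Type} [Fintype V] [Fintype E] {G : MWGraph d V E}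

section Paths

lemma pathRatio_cons (e : E) (γ : List E) :
    G.pathRatio (e :: γ) = G.r e * G.pathRatio γ :=
  List.prod_cons

lemma pathRatio_append (γ τ : List E) :
    G.pathRatio (γ ++ τ) = G.pathRatio γ * G.pathRatio τ := by
  rw [pathRatio, List.map_append, List.prod_append, pathRatio, pathRatio]

lemma pathRatio_pos (γ : List E) : 0 < G.pathRatio γ :=
  List.prod_pos (List.forall_mem_map.2 fun e _ => G.r_pos e)

lemma pathRatio_le_pow {q : ℝ} (hq : ∀ e, G.r e ≤ q) (γ : List E) :
    G.pathRatio γ ≤ q ^ γ.length := by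
  induction γ with
  | nil => exact le_rfl
  | cons e γ ih =>
    rw [pathRatio_cons, List.length_cons, pow_succ']
    exact mul_le_mul (hq e) ih (pathRatio_pos γ).le ((G.r_pos e).le.trans (hq e))

lemma pathRatio_le_one (γ : List E) : G.pathRatio γ ≤ 1 :=
  (pathRatio_le_pow (fun e => (G.r_lt_one e).le) γ).trans_eq (one_pow _)

lemma pathRatio_le_of_prefix {γ γ' : List E} (h : γ <+: γ') :
    G.pathRatio γ' ≤ G.pathRatio γ := by
  obtain ⟨τ, rfl⟩ := h
  rw [pathRatio_append]
  exact mul_le_of_le_one_right (pathRatio_pos γ).le (pathRatio_le_one τ)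

lemma dist_pathMap (γ : List E) (x y : Pt d) :
    dist (G.pathMap γ x) (G.pathMap γ y) = G.pathRatio γ * dist x y := by
  induction γ with
  | nil => exact (one_mul _).symm
  | cons e γ ih =>
    rw [pathRatio_cons, mul_assoc, ← ih]
    exact G.S_sim e _ _

lemma pathMap_append (γ τ : List E) : G.pathMap (γ ++ τ) = G.pathMap γ ∘ G.pathMap τ := by
  induction γ with
  | nil => rfl
  | cons e γ ih => simp only [List.cons_append, pathMap, ih, Function.comp_assoc]

lemma continuous_pathMap (γ : List E) : Continuous (G.pathMap γ) :=
  continuous_of_dist_eq_mul (pathRatio_pos γ).le (dist_pathMap γ)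

lemma pathTerm_append (j : V) (γ τ : List E) :
    G.pathTerm j (γ ++ τ) = G.pathTerm (G.pathTerm j γ) τ := by
  induction γ generalizing j with
  | nil => rfl
  | cons _ _ ih => exact ih _

lemma IsPathFrom.append {j : V} {γ τ : List E} (hγ : G.IsPathFrom j γ)
    (hτ : G.IsPathFrom (G.pathTerm j γ) τ) : G.IsPathFrom j (γ ++ τ) := by
  induction γ generalizing j with
  | nil => exact hτ
  | cons e γ ih => exact ⟨hγ.1, ih hγ.2 hτ⟩

lemma IsPathFrom.image_subset {Y : V → Set (Pt d)}
    (hY : ∀ e, G.S e '' Y (G.term e) ⊆ Y (G.init e)) {j : V} {γ : List E}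
    (hγ : G.IsPathFrom j γ) : G.pathMap γ '' Y (G.pathTerm j γ) ⊆ Y j := by
  induction γ generalizing j with
  | nil => exact (image_id _).subset
  | cons e γ ih =>
    obtain ⟨rfl, hγ⟩ := hγ
    simp only [pathMap, pathTerm, image_comp]
    exact (image_mono (ih hγ)).trans (hY e)

lemma exists_forall_le_r (G : MWGraph d V E) : ∃ p > 0, p ≤ 1 ∧ ∀ e, p ≤ G.r e := by
  rcases isEmpty_or_nonempty E with hE | hE
  · exact ⟨1, one_pos, le_rfl, fun e => hE.elim e⟩
  · obtain ⟨e, he⟩ := Finite.exists_min G.r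
    exact ⟨G.r e, G.r_pos e, (G.r_lt_one e).le, he⟩

lemma exists_forall_r_le (G : MWGraph d V E) : ∃ q, 0 ≤ q ∧ q < 1 ∧ ∀ e, G.r e ≤ q := by
  rcases isEmpty_or_nonempty E with hE | hE
  · exact ⟨0, le_rfl, one_pos, fun e => hE.elim e⟩
  · obtain ⟨e, he⟩ := Finite.exists_max G.r
    exact ⟨G.r e, (G.r_pos e).le, G.r_lt_one e, he⟩

end Paths

section Attractors

variable {C K KC : V → Set (Pt d)}

lemma IsAttractor.exists_path (hK : G.IsAttractor K) (n : ℕ) {j : V} {x : Pt d} (hx : x ∈ K j) :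
    ∃ γ : List E, γ.length = n ∧ G.IsPathFrom j γ ∧ x ∈ G.pathMap γ '' K (G.pathTerm j γ) := by
  induction n generalizing j x with
  | zero => exact ⟨[], rfl, trivial, (image_id _).superset hx⟩
  | succ n ih =>
    rw [hK.2.2 j] at hx
    obtain ⟨e, he, z, hz, rfl⟩ := mem_iUnion₂.1 hx
    obtain ⟨γ, hlength, hγ, hzγ⟩ := ih hz
    refine ⟨e :: γ, congrArg (· + 1) hlength, ⟨he, hγ⟩, ?_⟩
    simp only [pathMap, pathTerm, image_comp]
    exact mem_image_of_mem _ hzγ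

lemma IsInhomAttractor.image_subset (hKC : G.IsInhomAttractor C KC) (e : E) :
    G.S e '' KC (G.term e) ⊆ KC (G.init e) :=
  fun _ hx => (hKC.2.2 _).superset (Or.inl (mem_iUnion₂.2 ⟨e, rfl, hx⟩))

lemma IsInhomAttractor.condensation_subset (hKC : G.IsInhomAttractor C KC) (i : V) :
    C i ⊆ KC i :=
  fun _ hx => (hKC.2.2 i).superset (Or.inr hx)

end Attractors

section CondensationOpenSetCondition

variable {C U : V → Set (Pt d)}

/-- The condensation open set condition with open sets `U`: the open set condition together with
the requirement that each `C i` lies in the closure of `U i` and avoids the first-level images of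
the open sets. -/
def IsCOSCWith (G : MWGraph d V E) (C U : V → Set (Pt d)) : Prop :=
  G.IsOSCWith U ∧
    ∀ i, C i ⊆ closure (U i) \ ⋃ e ∈ {e : E | G.init e = i}, G.S e '' U (G.term e)

lemma IsOSCWith.image_subset (hU : G.IsOSCWith U) (e : E) :
    G.S e '' U (G.term e) ⊆ U (G.init e) :=
  fun _ hx => hU.2.2.2.2.1 _ (mem_iUnion₂.2 ⟨e, rfl, hx⟩)

lemma IsOSCWith.image_closure_subset (hU : G.IsOSCWith U) (e : E) :
    G.S e '' closure (U (G.term e)) ⊆ closure (U (G.init e)) :=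
  (image_closure_subset_closure_image (continuous_of_dist_eq_mul (G.r_pos e).le (G.S_sim e))).trans
    (closure_mono (hU.image_subset e))

lemma IsOSCWith.disjoint_image_closure (hU : G.IsOSCWith U) {e e' : E}
    (hinit : G.init e = G.init e') (hne : e ≠ e') :
    Disjoint (G.S e '' closure (U (G.term e))) (G.S e' '' U (G.term e')) :=
  ((hU.2.2.2.2.2 e e' hinit hne).closure_left
    (isOpenMap_of_dist_eq_mul (G.r_pos e') (G.S_sim e') _ (hU.2.1 _))).mono_left
    (image_closure_subset_closure_image (continuous_of_dist_eq_mul (G.r_pos e).le (G.S_sim e)))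

lemma IsCOSCWith.disjoint_pathMap_image (hCU : G.IsCOSCWith C U) {j : V} {γ γ' : List E}
    (hγ : G.IsPathFrom j γ) (hγ' : G.IsPathFrom j γ') (hprefix : ¬γ' <+: γ) :
    Disjoint (G.pathMap γ '' C (G.pathTerm j γ)) (G.pathMap γ' '' U (G.pathTerm j γ')) := by
  induction γ' generalizing j γ with
  | nil => exact absurd γ.nil_prefix hprefix
  | cons e' γ' ih =>
    obtain ⟨rfl, hγ'⟩ := hγ'
    have hU' : G.pathMap γ' '' U (G.pathTerm (G.term e') γ') ⊆ U (G.term e') :=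
      hγ'.image_subset hCU.1.image_subset
    cases γ with
    | nil =>
      simp only [pathMap, pathTerm, image_id, image_comp]
      refine disjoint_left.2 fun x hx hx' => (hCU.2 _ hx).2 ?_
      exact mem_iUnion₂.2 ⟨e', rfl, image_mono hU' hx'⟩
    | cons e γ =>
      obtain ⟨hinit, hγ⟩ := hγ
      simp only [pathMap, pathTerm, image_comp]
      by_cases hee : e = e'
      · subst hee
        rw [disjoint_image_iff (injective_of_dist_eq_mul (G.r_pos e) (G.S_sim e))]
        exact ih hγ hγ' fun h => hprefix (List.cons_prefix_cons.2 ⟨rfl, h⟩)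
      · refine (hCU.1.disjoint_image_closure hinit hee).mono (image_mono ?_) (image_mono hU')
        exact (image_mono fun x hx => (hCU.2 _ hx).1).trans
          (hγ.image_subset (Y := fun k => closure (U k)) hCU.1.image_closure_subset)

end CondensationOpenSetCondition

section DeepPaths

variable {C K KC U : V → Set (Pt d)} {η : ℝ}

/-- `τ` is an `η`-deep path from `j` to `i`: it has ratio at least `η` and maps the whole of `X i`
into `U j`, at distance at least `η` from the complement. -/
structure IsDeepPath (G : MWGraph d V E) (U : V → Set (Pt d)) (η : ℝ) (j i : V) (τ : List E) :
    Prop where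
  isPathFrom : G.IsPathFrom j τ
  pathTerm_eq : G.pathTerm j τ = i
  le_pathRatio : η ≤ G.pathRatio τ
  ball_subset : ∀ x ∈ G.X i, ball (G.pathMap τ x) η ⊆ U j

lemma IsDeepPath.mono {j i : V} {τ : List E} {δ : ℝ} (hτ : G.IsDeepPath U δ j i τ) (h : η ≤ δ) :
    G.IsDeepPath U η j i τ :=
  ⟨hτ.isPathFrom, hτ.pathTerm_eq, h.trans hτ.le_pathRatio,
    fun x hx => (ball_subset_ball h).trans (hτ.ball_subset x hx)⟩

-- Follow the coding of a point of `U j ∩ K j` for a long time, and then return to `i`.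
lemma exists_isDeepPath (hSC : G.StronglyConnected) (hK : G.IsAttractor K) (hU : G.IsOSCWith U)
    (hUK : ∀ i, (U i ∩ K i).Nonempty) (i j : V) : ∃ η > 0, ∃ τ, G.IsDeepPath U η j i τ := by
  obtain ⟨q, hq0, hq1, hq⟩ := G.exists_forall_r_le
  obtain ⟨x₀, hx₀U, hx₀K⟩ := hUK j
  obtain ⟨δ, hδ, hball⟩ := Metric.isOpen_iff.1 (hU.2.1 j) x₀ hx₀U
  obtain ⟨B, hB⟩ := isBounded_iff.1
    (isCompact_iUnion fun k => (hK.1 k).union (G.X_compact k)).isBounded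
  obtain ⟨n, hn⟩ : ∃ n : ℕ, q ^ n * B < δ / 2 := by
    have hlim := (tendsto_pow_atTop_nhds_zero_of_lt_one hq0 hq1).mul_const B
    rw [zero_mul] at hlim
    exact (hlim.eventually_lt_const (half_pos hδ)).exists
  obtain ⟨β, hβn, hβ, y, hy, hyx⟩ := hK.exists_path n hx₀K
  obtain ⟨τ, -, hτ, hτi⟩ := hSC (G.pathTerm j β) i
  have hnear : ∀ x ∈ G.X i, dist (G.pathMap (β ++ τ) x) x₀ ≤ q ^ n * B := by
    intro x hx
    have hτx : G.pathMap τ x ∈ G.X (G.pathTerm j β) :=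
      hτ.image_subset (fun e => (G.S_maps e).image_subset) (mem_image_of_mem _ (hτi ▸ hx))
    have hdist : dist (G.pathMap τ x) y ≤ B :=
      hB (mem_iUnion.2 ⟨_, Or.inr hτx⟩) (mem_iUnion.2 ⟨_, Or.inl hy⟩)
    rw [← hyx, pathMap_append, Function.comp_apply, dist_pathMap, ← hβn]
    exact mul_le_mul (pathRatio_le_pow hq β) hdist dist_nonneg (pow_nonneg hq0 _)
  refine ⟨min (G.pathRatio (β ++ τ)) (δ / 2), lt_min (pathRatio_pos _) (half_pos hδ), β ++ τ,
    hβ.append hτ, (pathTerm_append j β τ).trans hτi, min_le_left _ _, fun x hx => ?_⟩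
  refine (ball_subset_ball' ?_).trans hball
  linarith [hnear x hx, min_le_right (G.pathRatio (β ++ τ)) (δ / 2)]

lemma exists_forall_isDeepPath (hSC : G.StronglyConnected) (hK : G.IsAttractor K)
    (hU : G.IsOSCWith U) (hUK : ∀ i, (U i ∩ K i).Nonempty) (i : V) :
    ∃ η > 0, ∃ τ : V → List E, ∀ j, G.IsDeepPath U η j i (τ j) := by
  have : Nonempty V := ⟨i⟩
  choose η hη τ hτ using exists_isDeepPath hSC hK hU hUK i
  obtain ⟨k, hk⟩ := Finite.exists_min η
  exact ⟨η k, hη k, τ, fun j => (hτ j).mono (hk j)⟩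

lemma IsDeepPath.mul_le_dist_pathMap {j i : V} {γ τ : List E} (hτ : G.IsDeepPath U η j i τ)
    {x y : Pt d} (hx : x ∈ G.X i) (hy : y ∉ G.pathMap γ '' U j) :
    η * G.pathRatio γ ≤ dist y (G.pathMap (γ ++ τ) x) := by
  rw [mul_comm, pathMap_append, Function.comp_apply]
  by_contra! hlt
  refine hy (image_mono (hτ.ball_subset x hx) ?_)
  rw [image_ball_of_dist_eq_mul (pathRatio_pos γ) (dist_pathMap γ)]
  exact hlt

/-- A set of paths is `η`-sparse if prolonging one of its elements to another one shrinks the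
ratio by a factor less than `η`. -/
def IsSparse (G : MWGraph d V E) (η : ℝ) (Γ : Set (List E)) : Prop :=
  Γ.Pairwise fun γ γ' => γ <+: γ' → G.pathRatio γ' < η * G.pathRatio γ

lemma not_prefix_append_of_le_pathRatio {γ γ' τ : List E}
    (hsparse : γ <+: γ' → G.pathRatio γ' < η * G.pathRatio γ) (hτ : η ≤ G.pathRatio τ)
    (hprefix : ¬γ' <+: γ) : ¬γ' <+: γ ++ τ := by
  intro h
  have hle := pathRatio_le_of_prefix (G := G) h
  rw [pathRatio_append] at hle
  have hlt := hsparse ((List.prefix_or_prefix_of_prefix h (γ.prefix_append τ)).resolve_left hprefix)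
  nlinarith [pathRatio_pos (G := G) γ]

lemma isSparse_biUnion {ι : Type*} [LinearOrder ι] {t : Set ι} {Γ : ι → Set (List E)} (hη : η ≤ 1)
    (hanti : ∀ m ∈ t, IsAntichain (· <+: ·) (Γ m))
    (hlt : ∀ m ∈ t, ∀ n ∈ t, m < n → ∀ γ ∈ Γ m, ∀ γ' ∈ Γ n,
      G.pathRatio γ < η * G.pathRatio γ') : G.IsSparse η (⋃ m ∈ t, Γ m) := by
  intro γ hγ γ' hγ' hne hprefix
  obtain ⟨m, hm, hγ⟩ := mem_iUnion₂.1 hγ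
  obtain ⟨n, hn, hγ'⟩ := mem_iUnion₂.1 hγ'
  rcases lt_trichotomy m n with hmn | rfl | hnm
  · have hle := mul_le_of_le_one_left (pathRatio_pos (G := G) γ').le hη
    exact absurd (hlt m hm n hn hmn γ hγ γ' hγ')
      (hle.trans (pathRatio_le_of_prefix hprefix)).not_gt
  · exact absurd hprefix (hanti m hm hγ hγ' hne)
  · exact hlt n hn m hm hnm γ' hγ' γ hγ

variable {i j : V} {τ : V → List E} {Γ : Finset (List E)} {ρ : ℝ}

lemma lt_dist_of_isSparse (hC : G.IsCondensation C) (hCU : G.IsCOSCWith C U)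
    (hτ : ∀ k, G.IsDeepPath U η k i (τ k)) (hpath : ∀ γ ∈ Γ, G.IsPathFrom j γ)
    (hsparse : G.IsSparse η Γ) (hρ : ∀ γ ∈ Γ, ρ < η * G.pathRatio γ) :
    (Γ : Set (List E)).Pairwise fun γ γ' =>
      ∀ x ∈ G.pathMap (γ ++ τ (G.pathTerm j γ)) '' C i,
        ∀ y ∈ G.pathMap (γ' ++ τ (G.pathTerm j γ')) '' C i, ρ < dist x y := by
  intro γ hγ γ' hγ' hne x hx y hy
  wlog hprefix : ¬γ' <+: γ generalizing γ γ' x y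
  · rw [dist_comm]
    refine this hγ' hγ hne.symm y hy x hx fun h => hne ?_
    exact h.eq_of_length_le (not_not.1 hprefix).length_le
  have hdeep := hτ (G.pathTerm j γ)
  have hx' : x ∉ G.pathMap γ' '' U (G.pathTerm j γ') := by
    refine disjoint_left.1 (hCU.disjoint_pathMap_image
      ((hpath γ hγ).append hdeep.isPathFrom) (hpath γ' hγ')
      (not_prefix_append_of_le_pathRatio (hsparse hγ hγ' hne) hdeep.le_pathRatio hprefix)) ?_
    rwa [pathTerm_append, hdeep.pathTerm_eq]
  obtain ⟨c, hc, rfl⟩ := hy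
  exact (hρ γ' hγ').trans_le ((hτ _).mul_le_dist_pathMap ((hC i).2 hc) hx')

lemma sum_coveringNumber_le_of_isSparse (hC : G.IsCondensation C)
    (hKC : G.IsInhomAttractor C KC) (hCU : G.IsCOSCWith C U) (hη : 0 < η)
    (hτ : ∀ k, G.IsDeepPath U η k i (τ k)) (hpath : ∀ γ ∈ Γ, G.IsPathFrom j γ)
    (hsparse : G.IsSparse η Γ) (hρ0 : 0 < ρ) (hρ : ∀ γ ∈ Γ, 2 * ρ < η * G.pathRatio γ) :
    ∑ γ ∈ Γ, coveringNumber (C i) (ρ / (η * G.pathRatio γ)) ≤ coveringNumber (KC j) ρ := by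
  let σ : List E → List E := fun γ => γ ++ τ (G.pathTerm j γ)
  have hcopy : ∀ γ ∈ Γ, G.pathMap (σ γ) '' C i ⊆ KC j := by
    intro γ hγ
    have hdeep := hτ (G.pathTerm j γ)
    have hterm : G.pathTerm j (σ γ) = i := (pathTerm_append j γ _).trans hdeep.pathTerm_eq
    have hsubset := ((hpath γ hγ).append hdeep.isPathFrom).image_subset hKC.image_subset
    exact (image_mono (hKC.condensation_subset i)).trans (hterm ▸ hsubset)
  refine (Finset.sum_le_sum fun γ _ => ?_).trans
    (sum_coveringNumber_le (hKC.1 j) hρ0 hcopy (lt_dist_of_isSparse hC hCU hτ hpath hsparse hρ))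
  have hratio : η * G.pathRatio γ ≤ G.pathRatio (σ γ) := by
    rw [pathRatio_append, mul_comm]
    exact mul_le_mul_of_nonneg_left (hτ _).le_pathRatio (pathRatio_pos γ).le
  calc coveringNumber (C i) (ρ / (η * G.pathRatio γ))
      ≤ coveringNumber (C i) (ρ / G.pathRatio (σ γ)) :=
        coveringNumber_le_of_le (hC i).1 (div_pos hρ0 (pathRatio_pos _))
          (div_le_div_of_nonneg_left hρ0.le (mul_pos hη (pathRatio_pos γ)) hratio)
    _ ≤ coveringNumber (G.pathMap (σ γ) '' C i) ρ :=
        coveringNumber_div_le_of_image_subset (pathRatio_pos _) (dist_pathMap _)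
          ((hC i).1.image (continuous_pathMap _)) Subset.rfl hρ0

end DeepPaths

section StoppingPaths

variable [DecidableEq V]

/-- The paths from `j` stopped as soon as their ratio is at most `u`, or their length is `n`. -/
def stoppingPaths (G : MWGraph d V E) : ℕ → ℝ → V → Finset (List E)
  | 0, _, _ => {[]}
  | n + 1, u, j =>
    if 1 ≤ u then {[]}
    else ((Finset.univ.filter fun e => G.init e = j).sigma
      fun e => stoppingPaths G n (u / G.r e) (G.term e)).map sigmaConsEmbedding

variable {n : ℕ} {u : ℝ} {j : V} {γ : List E}

lemma stoppingPaths_of_one_le (hu : 1 ≤ u) : G.stoppingPaths n u j = {[]} := by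
  cases n with
  | zero => rfl
  | succ n => exact if_pos hu

lemma mem_stoppingPaths_succ (hu : u < 1) :
    γ ∈ G.stoppingPaths (n + 1) u j ↔ ∃ e, G.init e = j ∧
      ∃ β ∈ G.stoppingPaths n (u / G.r e) (G.term e), e :: β = γ := by
  simp [stoppingPaths, hu.not_ge, and_assoc]

lemma isPathFrom_of_mem_stoppingPaths (hγ : γ ∈ G.stoppingPaths n u j) : G.IsPathFrom j γ := by
  induction n generalizing u j γ with
  | zero => rw [Finset.mem_singleton.1 hγ]; trivial
  | succ n ih =>
    rcases le_or_gt 1 u with hu | hu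
    · rw [stoppingPaths_of_one_le hu, Finset.mem_singleton] at hγ
      rw [hγ]; trivial
    · obtain ⟨e, he, β, hβ, rfl⟩ := (mem_stoppingPaths_succ hu).1 hγ
      exact ⟨he, ih hβ⟩

lemma isAntichain_stoppingPaths :
    IsAntichain (· <+: ·) (G.stoppingPaths n u j : Set (List E)) := by
  induction n generalizing u j with
  | zero => simp [stoppingPaths]
  | succ n ih =>
    rcases le_or_gt 1 u with hu | hu
    · simp [stoppingPaths_of_one_le hu]
    · intro γ hγ γ' hγ' hne (hprefix : γ <+: γ')
      obtain ⟨e, -, β, hβ, rfl⟩ := (mem_stoppingPaths_succ hu).1 hγ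
      obtain ⟨e', -, β', hβ', rfl⟩ := (mem_stoppingPaths_succ hu).1 hγ'
      obtain ⟨rfl, hβprefix⟩ := List.cons_prefix_cons.1 hprefix
      exact ih hβ hβ' (fun h => hne (congrArg _ h)) hβprefix

lemma pathRatio_le_of_mem_stoppingPaths {q : ℝ} (hq : ∀ e, G.r e ≤ q) (hq0 : 0 ≤ q)
    (hu : q ^ n ≤ u) (hγ : γ ∈ G.stoppingPaths n u j) : G.pathRatio γ ≤ u := by
  induction n generalizing u j γ with
  | zero => exact (pathRatio_le_one γ).trans hu
  | succ n ih =>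
    rcases le_or_gt 1 u with hu1 | hu1
    · exact (pathRatio_le_one γ).trans hu1
    · obtain ⟨e, -, β, hβ, rfl⟩ := (mem_stoppingPaths_succ hu1).1 hγ
      rw [pathRatio_cons, ← le_div_iff₀' (G.r_pos e)]
      refine ih ?_ hβ
      rw [le_div_iff₀ (G.r_pos e)]
      exact (mul_le_mul_of_nonneg_left (hq e) (pow_nonneg hq0 n)).trans hu

lemma le_pathRatio_of_mem_stoppingPaths {p : ℝ} (hp0 : 0 ≤ p) (hp : ∀ e, p ≤ G.r e)
    (hγ : γ ∈ G.stoppingPaths n u j) : min 1 (p * u) ≤ G.pathRatio γ := by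
  induction n generalizing u j γ with
  | zero => rw [Finset.mem_singleton.1 hγ]; exact min_le_left _ _
  | succ n ih =>
    rcases le_or_gt 1 u with hu | hu
    · rw [stoppingPaths_of_one_le hu, Finset.mem_singleton] at hγ
      rw [hγ]; exact min_le_left _ _
    · obtain ⟨e, -, β, hβ, rfl⟩ := (mem_stoppingPaths_succ hu).1 hγ
      have hpu : p * u ≤ min (G.r e) (p * u) :=
        le_min ((mul_le_of_le_one_right hp0 hu.le).trans (hp e)) le_rfl
      calc min 1 (p * u) ≤ min (G.r e) (p * u) := (min_le_right _ _).trans hpu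
        _ = G.r e * min 1 (p * (u / G.r e)) := by
          rw [mul_min_of_nonneg _ _ (G.r_pos e).le, mul_one, mul_left_comm,
            mul_div_cancel₀ _ (G.r_pos e).ne']
        _ ≤ G.r e * G.pathRatio β := mul_le_mul_of_nonneg_left (ih hβ) (G.r_pos e).le
        _ = G.pathRatio (e :: β) := (pathRatio_cons e β).symm

lemma amatrix_mulVec (s : ℝ) (w : V → ℝ) (j : V) :
    (G.Amatrix s).mulVec w j = ∑ e with G.init e = j, G.r e ^ s * w (G.term e) := by
  simp only [Matrix.mulVec, dotProduct, Amatrix, Matrix.of_apply, Finset.sum_mul, ite_mul, zero_mul,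
    ite_and, Finset.sum_filter]
  rw [Finset.sum_comm]
  refine Finset.sum_congr rfl fun e _ => ?_
  split_ifs <;> simp

lemma amatrix_nonneg (s : ℝ) (i j : V) : 0 ≤ G.Amatrix s i j :=
  Finset.sum_nonneg fun e _ => by split_ifs <;> simp [Real.rpow_nonneg (G.r_pos e).le]

lemma le_sum_stoppingPaths {s : ℝ} {w : V → ℝ} (hw : w ≤ (G.Amatrix s).mulVec w) (n : ℕ) (u : ℝ)
    (j : V) : w j ≤ ∑ γ ∈ G.stoppingPaths n u j, G.pathRatio γ ^ s * w (G.pathTerm j γ) := by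
  have hroot : ∀ j, w j ≤ ∑ γ ∈ {[]}, G.pathRatio γ ^ s * w (G.pathTerm j γ) := fun j => by
    simp [pathRatio, pathTerm]
  induction n generalizing u j with
  | zero => exact hroot j
  | succ n ih =>
    rcases le_or_gt 1 u with hu | hu
    · exact (hroot j).trans_eq (by rw [stoppingPaths_of_one_le hu])
    · rw [stoppingPaths, if_neg hu.not_ge, Finset.sum_map, Finset.sum_sigma]
      refine (hw j).trans ?_
      rw [amatrix_mulVec]
      refine Finset.sum_le_sum fun e _ => ?_
      simp only [sigmaConsEmbedding_mk, pathRatio_cons, pathTerm,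
        Real.mul_rpow (G.r_pos e).le (pathRatio_pos _).le, mul_assoc, ← Finset.mul_sum]
      exact mul_le_mul_of_nonneg_left (ih _ _) (Real.rpow_nonneg (G.r_pos e).le s)

lemma exists_isAntichain_paths {s p : ℝ} {w : V → ℝ} (hs : 0 ≤ s) (hp0 : 0 ≤ p) (hp1 : p ≤ 1)
    (hp : ∀ e, p ≤ G.r e) (hw : w ≤ (G.Amatrix s).mulVec w) (hw1 : w ≤ 1) (hu0 : 0 < u)
    (hu1 : u ≤ 1) (j : V) :
    ∃ Γ : Finset (List E), (∀ γ ∈ Γ, G.IsPathFrom j γ) ∧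
      IsAntichain (· <+: ·) (Γ : Set (List E)) ∧
      (∀ γ ∈ Γ, G.pathRatio γ ∈ Icc (p * u) u) ∧ w j ≤ Γ.card * u ^ s := by
  obtain ⟨q, hq0, hq1, hq⟩ := G.exists_forall_r_le
  obtain ⟨n, hn⟩ := exists_pow_lt_of_lt_one hu0 hq1
  have hle : ∀ γ ∈ G.stoppingPaths n u j, G.pathRatio γ ≤ u :=
    fun γ hγ => pathRatio_le_of_mem_stoppingPaths hq hq0 hn.le hγ
  refine ⟨G.stoppingPaths n u j, fun γ => isPathFrom_of_mem_stoppingPaths,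
    isAntichain_stoppingPaths, fun γ hγ => ⟨?_, hle γ hγ⟩, ?_⟩
  · have hmin := le_pathRatio_of_mem_stoppingPaths hp0 hp hγ
    rwa [min_eq_right (mul_le_one₀ hp1 hu0.le hu1)] at hmin
  · rw [← nsmul_eq_mul]
    refine (le_sum_stoppingPaths hw n u j).trans (Finset.sum_le_card_nsmul _ _ _ fun γ hγ => ?_)
    exact (mul_le_of_le_one_right (Real.rpow_nonneg (pathRatio_pos γ).le s) (hw1 _)).trans
      (Real.rpow_le_rpow (pathRatio_pos γ).le (hle γ hγ) hs)

end StoppingPaths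

section LowerBound

variable {C KC U : V → Set (Pt d)} {η ρ a p s : ℝ} {i j : V} {τ : V → List E}

lemma sum_card_mul_coveringNumber_le (hC : G.IsCondensation C) (hKC : G.IsInhomAttractor C KC)
    (hCU : G.IsCOSCWith C U) (hη : 0 < η) (hτ : ∀ k, G.IsDeepPath U η k i (τ k)) {ι : Type*}
    [LinearOrder ι] {t : Finset ι} {Γ : ι → Finset (List E)} {b : ι → ℝ} (hb0 : ∀ m ∈ t, 0 < b m)
    (hb : ∀ m ∈ t, b m < 1 / 2) (hpath : ∀ m ∈ t, ∀ γ ∈ Γ m, G.IsPathFrom j γ)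
    (hanti : ∀ m ∈ t, IsAntichain (· <+: ·) (Γ m : Set (List E)))
    (hlt : ∀ m ∈ t, ∀ n ∈ t, m < n → ∀ γ ∈ Γ m, ∀ γ' ∈ Γ n,
      G.pathRatio γ < η * G.pathRatio γ')
    (hρ0 : 0 < ρ) (hρ : ∀ m ∈ t, ∀ γ ∈ Γ m, ρ / b m ≤ η * G.pathRatio γ) :
    ∑ m ∈ t, (Γ m).card * coveringNumber (C i) (b m) ≤ coveringNumber (KC j) ρ := by
  classical
  have hη1 : η ≤ 1 := (hτ j).le_pathRatio.trans (pathRatio_le_one _)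
  have hdisj : (t : Set ι).PairwiseDisjoint Γ := by
    intro m hm n hn hmn
    refine Finset.disjoint_left.2 fun γ hγm hγn => ?_
    have hle := mul_le_of_le_one_left (pathRatio_pos (G := G) γ).le hη1
    rcases hmn.lt_or_gt with h | h
    · exact (hlt m hm n hn h γ hγm γ hγn).not_ge hle
    · exact (hlt n hn m hm h γ hγn γ hγm).not_ge hle
  have hsparse : G.IsSparse η (t.biUnion Γ : Finset (List E)) := by
    rw [Finset.coe_biUnion]
    exact isSparse_biUnion hη1 hanti hlt
  have hfar : ∀ γ ∈ t.biUnion Γ, 2 * ρ < η * G.pathRatio γ := by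
    intro γ hγ
    obtain ⟨m, hm, hγ⟩ := Finset.mem_biUnion.1 hγ
    refine lt_of_lt_of_le ?_ (hρ m hm γ hγ)
    rw [lt_div_iff₀ (hb0 m hm)]
    nlinarith [hb m hm]
  calc ∑ m ∈ t, (Γ m).card * coveringNumber (C i) (b m)
      ≤ ∑ m ∈ t, ∑ γ ∈ Γ m, coveringNumber (C i) (ρ / (η * G.pathRatio γ)) := by
        refine Finset.sum_le_sum fun m hm => Finset.card_nsmul_le_sum _ _ _ fun γ hγ => ?_
        have hpos := mul_pos hη (pathRatio_pos (G := G) γ)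
        refine coveringNumber_le_of_le (hC i).1 (div_pos hρ0 hpos) ?_
        exact (div_le_comm₀ (hb0 m hm) hpos).1 (hρ m hm γ hγ)
    _ = ∑ γ ∈ t.biUnion Γ, coveringNumber (C i) (ρ / (η * G.pathRatio γ)) :=
        (Finset.sum_biUnion hdisj).symm
    _ ≤ coveringNumber (KC j) ρ := by
        refine sum_coveringNumber_le_of_isSparse hC hKC hCU hη hτ (fun γ hγ => ?_) hsparse hρ0 hfar
        obtain ⟨m, hm, hγ⟩ := Finset.mem_biUnion.1 hγ
        exact hpath m hm γ hγ

variable [DecidableEq V] {w : V → ℝ}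

lemma sum_div_rpow_mul_coveringNumber_le (hC : G.IsCondensation C)
    (hKC : G.IsInhomAttractor C KC) (hCU : G.IsCOSCWith C U) (hη : 0 < η)
    (hτ : ∀ k, G.IsDeepPath U η k i (τ k)) (hs : 0 ≤ s) (hw : w ≤ (G.Amatrix s).mulVec w)
    (hw1 : w ≤ 1) (hp0 : 0 < p) (hp1 : p ≤ 1) (hp : ∀ e, p ≤ G.r e) {ι : Type*} [LinearOrder ι]
    {t : Finset ι} {u : ι → ℝ} (hu0 : ∀ m ∈ t, 0 < u m) (hu1 : ∀ m ∈ t, u m ≤ 1)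
    (hu : ∀ m ∈ t, ∀ n ∈ t, m < n → u m < η * p * u n) (hρ0 : 0 < ρ)
    (hρ : ∀ m ∈ t, 2 * ρ < η * p * u m) :
    ∑ m ∈ t, w j / u m ^ s * coveringNumber (C i) (ρ / (η * p * u m)) ≤
      coveringNumber (KC j) ρ := by
  choose! Γ hpath hanti hratio hcard using fun m hm =>
    exists_isAntichain_paths hs hp0.le hp1 hp hw hw1 (hu0 m hm) (hu1 m hm) j
  have hpos : ∀ m ∈ t, 0 < η * p * u m := fun m hm => mul_pos (mul_pos hη hp0) (hu0 m hm)
  have hle : ∀ m ∈ t, ∀ γ ∈ Γ m, η * p * u m ≤ η * G.pathRatio γ := by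
    intro m hm γ hγ
    rw [mul_assoc]
    exact mul_le_mul_of_nonneg_left (hratio m hm γ hγ).1 hη.le
  have hsum := sum_card_mul_coveringNumber_le (b := fun m => ρ / (η * p * u m)) hC hKC hCU hη hτ
    (fun m hm => div_pos hρ0 (hpos m hm))
    (fun m hm => (div_lt_iff₀ (hpos m hm)).2 (by linarith [hρ m hm])) hpath hanti
    (fun m hm n hn hmn γ hγ γ' hγ' =>
      (hratio m hm γ hγ).2.trans_lt ((hu m hm n hn hmn).trans_le (hle n hn γ' hγ')))
    hρ0 (fun m hm γ hγ => (div_div_cancel₀ hρ0.ne').trans_le (hle m hm γ hγ))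
  refine le_trans ?_ (Nat.cast_le.2 hsum)
  rw [Nat.cast_sum]
  refine Finset.sum_le_sum fun m hm => ?_
  rw [Nat.cast_mul]
  refine mul_le_mul_of_nonneg_right ?_ (Nat.cast_nonneg _)
  exact (div_le_iff₀ (Real.rpow_pos_of_pos (hu0 m hm) s)).2 (hcard m hm)

-- Apply the preceding estimate to the ratios `u m = ρ / (η * p * a ^ (m + 1))`: the copies of
-- `C i` along the corresponding paths look at scale `ρ` like `C i` at scale `a ^ (m + 1)`.
lemma mul_sum_rpow_mul_coveringNumber_le (hC : G.IsCondensation C) (hKC : G.IsInhomAttractor C KC)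
    (hCU : G.IsCOSCWith C U) (hη : 0 < η) (hτ : ∀ k, G.IsDeepPath U η k i (τ k)) (hs : 0 ≤ s)
    (hw : w ≤ (G.Amatrix s).mulVec w) (hw1 : w ≤ 1) (hp0 : 0 < p) (hp1 : p ≤ 1)
    (hp : ∀ e, p ≤ G.r e) (ha0 : 0 < a) (ha : a < 1 / 2) (hap : a < η * p) {k : ℕ}
    (hρ0 : 0 < ρ) (hρ : ρ ≤ η * p * a ^ k) :
    w j * (η * p) ^ s *
        ∑ m ∈ Finset.range k, (a ^ (m + 1)) ^ s * coveringNumber (C i) (a ^ (m + 1)) ≤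
      ρ ^ s * coveringNumber (KC j) ρ := by
  have ha1 : a ≤ 1 := by linarith
  have hηp := mul_pos hη hp0
  set u : ℕ → ℝ := fun m => ρ / (η * p * a ^ (m + 1)) with hu
  have hu0 : ∀ m, 0 < u m := fun m => by positivity
  have hcancel : ∀ m, η * p * u m = ρ / a ^ (m + 1) := fun m => by rw [hu]; field_simp
  have hu1 : ∀ m ∈ Finset.range k, u m ≤ 1 := by
    intro m hm
    refine div_le_one_of_le₀ (hρ.trans ?_) (by positivity)
    exact mul_le_mul_of_nonneg_left
      (pow_le_pow_of_le_one ha0.le ha1 (Finset.mem_range.1 hm)) hηp.le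
  have hlt : ∀ m n, m < n → u m < η * p * u n := by
    intro m n hmn
    rw [hcancel]
    refine div_lt_div_of_pos_left hρ0 (pow_pos ha0 _) ?_
    calc a ^ (n + 1) ≤ a ^ (m + 1 + 1) := pow_le_pow_of_le_one ha0.le ha1 (by omega)
      _ = a * a ^ (m + 1) := pow_succ' a (m + 1)
      _ < η * p * a ^ (m + 1) := mul_lt_mul_of_pos_right hap (pow_pos ha0 _)
  have hfar : ∀ m, 2 * ρ < η * p * u m := by
    intro m
    rw [hcancel, lt_div_iff₀ (pow_pos ha0 _)]
    have hpow : a ^ (m + 1) < 1 / 2 := (pow_le_of_le_one ha0.le ha1 m.succ_ne_zero).trans_lt ha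
    linarith [mul_lt_mul_of_pos_left hpow hρ0]
  have hsum := sum_div_rpow_mul_coveringNumber_le (j := j) hC hKC hCU hη hτ hs hw hw1 hp0 hp1 hp
    (fun m _ => hu0 m) hu1 (fun m _ n _ => hlt m n) hρ0 (fun m _ => hfar m)
  rw [← div_le_iff₀' (Real.rpow_pos_of_pos hρ0 s)]
  refine le_trans (le_of_eq ?_) hsum
  rw [Finset.mul_sum, Finset.sum_div]
  refine Finset.sum_congr rfl fun m _ => ?_
  rw [hcancel, div_div_cancel₀ hρ0.ne', hu, Real.div_rpow hρ0.le (by positivity),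
    Real.mul_rpow hηp.le (by positivity)]
  field_simp

lemma tendsto_rpow_mul_coveringNumber_of_pos (hC : G.IsCondensation C)
    (hKC : G.IsInhomAttractor C KC) (hCU : G.IsCOSCWith C U) (hη : 0 < η)
    (hτ : ∀ k, G.IsDeepPath U η k i (τ k)) (hs : 0 ≤ s) (hw : w ≤ (G.Amatrix s).mulVec w)
    (hw1 : w ≤ 1) (hwj : 0 < w j)
    (hint : ∫⁻ t in Ioi (0 : ℝ),
      ENNReal.ofReal (Real.exp (-s * t) * (coveringNumber (C i) (Real.exp (-t)) : ℝ)) = ⊤) :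
    Tendsto (fun r : ℝ => r ^ s * coveringNumber (KC j) r) (𝓝[>] 0) atTop := by
  obtain ⟨p, hp0, hp1, hp⟩ := G.exists_forall_le_r
  have hηp := mul_pos hη hp0
  obtain ⟨a, ha0, ha⟩ := exists_between (lt_min one_half_pos hηp)
  obtain ⟨ha2, hap⟩ := lt_min_iff.1 ha
  have hdiv : Tendsto (fun k => ∑ m ∈ Finset.range k,
      (a ^ (m + 1)) ^ s * (coveringNumber (C i) (a ^ (m + 1)) : ℝ)) atTop atTop := by
    refine (not_summable_iff_tendsto_nat_atTop_of_nonneg fun m => by positivity).1 ?_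
    exact not_summable_of_lintegral_eq_top (N := fun r => coveringNumber (C i) r)
      (fun r => Nat.cast_nonneg _)
      (fun r hr r' _ h => Nat.cast_le.2 (coveringNumber_le_of_le (hC i).1 hr h))
      hs ha0 (ha2.trans one_half_lt_one) hint
  refine tendsto_atTop.2 fun M => ?_
  have hconst : 0 < w j * (η * p) ^ s := mul_pos hwj (Real.rpow_pos_of_pos hηp s)
  obtain ⟨k, hk⟩ := ((hdiv.const_mul_atTop hconst).eventually_ge_atTop M).exists
  filter_upwards [Ioc_mem_nhdsGT (mul_pos hηp (pow_pos ha0 k))] with ρ hρ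
  exact hk.trans (mul_sum_rpow_mul_coveringNumber_le hC hKC hCU hη hτ hs hw hw1 hp0 hp1 hp ha0 ha2
    hap hρ.1 hρ.2)

end LowerBound

lemma IsPathFrom.tendsto_rpow_mul_coveringNumber {C KC : V → Set (Pt d)} {s : ℝ} {j : V}
    {γ : List E} (hKC : G.IsInhomAttractor C KC) (hγ : G.IsPathFrom j γ)
    (h : Tendsto (fun r : ℝ => r ^ s * coveringNumber (KC (G.pathTerm j γ)) r) (𝓝[>] 0) atTop) :
    Tendsto (fun r : ℝ => r ^ s * coveringNumber (KC j) r) (𝓝[>] 0) atTop := by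
  have hR := pathRatio_pos (G := G) γ
  have hscale : Tendsto (fun r : ℝ => r / G.pathRatio γ) (𝓝[>] 0) (𝓝[>] 0) := by
    refine tendsto_nhdsWithin_iff.2 ⟨?_, eventually_mem_nhdsWithin.mono fun r hr => div_pos hr hR⟩
    exact ((continuous_id.div_const _).tendsto' 0 0 (zero_div _)).mono_left nhdsWithin_le_nhds
  refine tendsto_atTop_mono' _ ?_
    ((h.comp hscale).const_mul_atTop (Real.rpow_pos_of_pos hR s))
  filter_upwards [self_mem_nhdsWithin] with r hr
  rw [Function.comp_apply, ← mul_assoc,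
    ← Real.mul_rpow hR.le (div_pos hr hR).le, mul_div_cancel₀ _ hR.ne']
  refine mul_le_mul_of_nonneg_left (Nat.cast_le.2 ?_) (Real.rpow_nonneg (le_of_lt hr) s)
  exact coveringNumber_div_le_of_image_subset hR (dist_pathMap γ) (hKC.1 j)
    (hγ.image_subset hKC.image_subset) hr

end MWGraph

theorem stmt4 {d : ℕ} {V E : Type} [Fintype V] [Fintype E] [DecidableEq V]
    (G : MWGraph d V E) (hSC : G.StronglyConnected)
    (C K KC U : V → Set (Pt d))
    (hC : G.IsCondensation C) (hK : G.IsAttractor K) (hKC : G.IsInhomAttractor C KC)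
    (hU : G.IsOSCWith U) (hUK : ∀ i, (U i ∩ K i).Nonempty)
    (hCU : ∀ i, C i ⊆ closure (U i) \ ⋃ e ∈ {e : E | G.init e = i}, G.S e '' U (G.term e))
    (s0 : ℝ) (hs0 : IsS0 G s0)
    (hint : ∃ i : V, ∫⁻ t in Set.Ioi (0 : ℝ),
      ENNReal.ofReal (Real.exp (-s0 * t) * (coveringNumber (C i) (Real.exp (-t)) : ℝ)) = ⊤) :
    ∀ j : V, Tendsto (fun t : ℝ =>
      (coveringNumber (KC j) (Real.exp (-t)) : ℝ) / Real.exp (s0 * t)) atTop atTop := by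
  intro j
  obtain ⟨i, hint⟩ := hint
  have : Nonempty V := ⟨i⟩
  obtain ⟨η, hη, τ, hτ⟩ := MWGraph.exists_forall_isDeepPath hSC hK hU hUK i
  obtain ⟨w, hw1, ⟨k, hwk⟩, hw⟩ :=
    exists_matrixSpectralRadius_smul_le_mulVec (MWGraph.amatrix_nonneg (G := G) s0)
  rw [hs0.2, one_smul] at hw
  have hk : Tendsto (fun r : ℝ => r ^ s0 * coveringNumber (KC k) r) (𝓝[>] 0) atTop :=
    MWGraph.tendsto_rpow_mul_coveringNumber_of_pos hC hKC ⟨hU, hCU⟩ hη hτ hs0.1 hw hw1 hwk hint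
  obtain ⟨γ, -, hγ, rfl⟩ := hSC j k
  exact tendsto_div_exp_of_tendsto_rpow_mul (hγ.tendsto_rpow_mul_coveringNumber hKC hk)
end
end

section
/- Let (G,C) be a strongly connected inhomogeneous Mauldin–Williams graph in ℝ^d satisfying the SOSC with open sets (U_i)_{i∈V} and condensation sets (C_i)_{i∈V} such that ∫₀^∞ e^{−s₀(G)t} N_{e^{−t}}(C_i) dt < ∞ for all i ∈ V. Then ∫₀^∞ e^{−s₀(G)t} N_{e^{−t}}(K_i^C ∩ [∂U_i]_{e^{−t}}) dt < ∞ for all i ∈ V. -/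
open Set Filter Topology MeasureTheory Metric

noncomputable section

/-
By Perron–Frobenius there is a positive vector `v` with `A_G^s v ≤ v`. Covering `C i` and the
images `S_e (K_j^C)` separately gives a critical renewal inequality for the covering numbers of
the sets `K_i^C`, weighted by `e^{-st}`. Near the boundary of `U_i` one edge can be spared: if all
ratios are small, then the image of `K_j^C` under a suitable edge `e : i → j` stays close to a
given point of `U_i ∩ K_i`, hence away from `∂U_i`, while every other image only meets the
neighbourhood of `∂U_i` in the image of a neighbourhood of `∂U_j`. The ratios may be assumed small
because all data of this inequality pass to iterates of the graph. Removing one edge at each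
vertex makes the inequality strictly subcritical with respect to `v`, so iterating it bounds the
integral by a geometric series. The boundary covering numbers need not be measurable in `t`: they
are first bounded pointwise by the series of iterates of the measurable inhomogeneity, and only
this series is integrated.
-/

section Covering

open scoped NNReal ENNReal

variable {X Y : Type*}

section PseudoEMetric

variable [PseudoEMetricSpace X] [PseudoEMetricSpace Y]

lemma exists_isCover_encard_eq_externalCoveringNumber (ε : ℝ≥0) (A : Set X) :
    ∃ N : Set X, IsCover ε A N ∧ N.encard = externalCoveringNumber ε A := by
  obtain ⟨N, hN⟩ := ENat.exists_eq_iInf fun N : Set X => ⨅ _ : IsCover ε A N, N.encard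
  by_cases hcov : IsCover ε A N
  · exact ⟨N, hcov, by rw [externalCoveringNumber, ← hN, iInf_pos hcov]⟩
  · have htop : externalCoveringNumber ε A = ⊤ := by
      rw [externalCoveringNumber, ← hN, iInf_neg hcov]
    refine ⟨A, .refl ε A, ?_⟩
    rw [htop, ← top_le_iff, ← htop]
    exact externalCoveringNumber_le_encard_self A

lemma externalCoveringNumber_union_le (ε : ℝ≥0) (A B : Set X) :
    externalCoveringNumber ε (A ∪ B) ≤
      externalCoveringNumber ε A + externalCoveringNumber ε B := by
  obtain ⟨M, hM, hMcard⟩ := exists_isCover_encard_eq_externalCoveringNumber ε A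
  obtain ⟨N, hN, hNcard⟩ := exists_isCover_encard_eq_externalCoveringNumber ε B
  have hMN : IsCover ε (A ∪ B) (M ∪ N) := by
    rintro x (hx | hx)
    · exact hM.mono subset_union_left hx
    · exact hN.mono subset_union_right hx
  rw [← hMcard, ← hNcard]
  exact hMN.externalCoveringNumber_le_encard.trans (encard_union_le M N)

lemma externalCoveringNumber_image_le {K : ℝ≥0} {f : X → Y} (hf : LipschitzWith K f)
    (ε : ℝ≥0) (A : Set X) :
    externalCoveringNumber (K * ε) (f '' A) ≤ externalCoveringNumber ε A := by
  obtain ⟨N, hN, hNcard⟩ := exists_isCover_encard_eq_externalCoveringNumber ε A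
  rw [← hNcard]
  exact (hN.image_lipschitz hf).externalCoveringNumber_le_encard.trans (encard_image_le f N)

end PseudoEMetric

lemma externalCoveringNumber_ne_top [PseudoMetricSpace X] [ProperSpace X] {A : Set X}
    (hA : Bornology.IsBounded A) {ε : ℝ≥0} (hε : ε ≠ 0) : externalCoveringNumber ε A ≠ ⊤ := by
  obtain ⟨N, -, hNfin, hN⟩ := exists_finite_isCover_of_isCompact_closure hε hA.isCompact_closure
  exact (hN.externalCoveringNumber_le_encard.trans_lt hNfin.encard_lt_top).ne

lemma externalCoveringNumber_le_of_subset_iUnion_closedBall [PseudoMetricSpace X] {A : Set X}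
    {ε : ℝ≥0} {k : ℕ} {c : Fin k → X} (hc : A ⊆ ⋃ i, closedBall (c i) ε) :
    externalCoveringNumber ε A ≤ k := by
  have hcover : IsCover ε A (range c) := by
    rwa [isCover_iff_subset_iUnion_closedBall, biUnion_range]
  calc externalCoveringNumber ε A ≤ (range c).encard := hcover.externalCoveringNumber_le_encard
    _ ≤ (univ : Set (Fin k)).encard := image_univ (f := c) ▸ encard_image_le c univ
    _ = k := by simp

lemma exists_fin_subset_iUnion_closedBall [PseudoMetricSpace X] {A : Set X} {ε : ℝ≥0} {k : ℕ}
    (hk : externalCoveringNumber ε A = k) :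
    ∃ c : Fin k → X, A ⊆ ⋃ i, closedBall (c i) ε := by
  obtain ⟨N, hN, hNcard⟩ := exists_isCover_encard_eq_externalCoveringNumber ε A
  lift N to Finset X using finite_of_encard_eq_coe (hNcard.trans hk)
  have hcard : N.card = k := by exact_mod_cast hNcard.trans hk
  refine ⟨fun i => (N.equivFinOfCardEq hcard).symm i, fun x hx => ?_⟩
  obtain ⟨y, hy, hxy⟩ := mem_iUnion₂.1 (isCover_iff_subset_iUnion_closedBall.1 hN hx)
  exact mem_iUnion.2 ⟨N.equivFinOfCardEq hcard ⟨y, hy⟩, by simpa using hxy⟩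

lemma coe_coveringNumber_eq_externalCoveringNumber {d : ℕ} {A : Set (Pt d)}
    (hA : Bornology.IsBounded A) {ε : ℝ≥0} (hε : ε ≠ 0) :
    (_root_.coveringNumber A ε : ℕ∞) = externalCoveringNumber ε A := by
  obtain ⟨k, hk⟩ := ENat.ne_top_iff_exists.1 (externalCoveringNumber_ne_top hA hε)
  have hmem := exists_fin_subset_iUnion_closedBall hk.symm
  refine le_antisymm ?_ ?_
  · rw [← hk]
    exact_mod_cast Nat.sInf_le hmem
  · obtain ⟨c, hc⟩ := Nat.sInf_mem
      (s := {k : ℕ | ∃ c : Fin k → Pt d, A ⊆ ⋃ i, closedBall (c i) ε}) ⟨k, hmem⟩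
    exact externalCoveringNumber_le_of_subset_iUnion_closedBall hc

end Covering

section WeightedCovering

open scoped NNReal ENNReal

variable {X Y : Type*}

/-- The covering number of `A` at scale `e^{-t}`, normalised by the factor `e^{-st}` expected of a
set of dimension `s`. In the logarithmic scale `t`, a similarity of ratio `ρ` acts by the
translation by `-log ρ`. -/
def weightedCoveringNumber [PseudoEMetricSpace X] (s : ℝ) (A : Set X) (t : ℝ) : ℝ≥0∞ :=
  ENNReal.ofReal (Real.exp (-s * t)) * (externalCoveringNumber (Real.exp (-t)).toNNReal A : ℝ≥0∞)

/-- The weighted covering number of the part of `A` that lies within `e^{-t}` of the boundary of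
`U`, at the same scale `e^{-t}`. -/
def boundaryCoveringNumber [PseudoEMetricSpace X] (s : ℝ) (A U : Set X) (t : ℝ) : ℝ≥0∞ :=
  weightedCoveringNumber s (A ∩ cthickening (Real.exp (-t)) (frontier U)) t

section PseudoEMetric

variable [PseudoEMetricSpace X] [PseudoEMetricSpace Y]

lemma weightedCoveringNumber_mono {s t : ℝ} {A B : Set X} (h : A ⊆ B) :
    weightedCoveringNumber s A t ≤ weightedCoveringNumber s B t :=
  mul_le_mul_right (ENat.toENNReal_mono (externalCoveringNumber_mono_set h)) _

lemma weightedCoveringNumber_union_le (s : ℝ) (A B : Set X) (t : ℝ) :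
    weightedCoveringNumber s (A ∪ B) t ≤
      weightedCoveringNumber s A t + weightedCoveringNumber s B t := by
  rw [weightedCoveringNumber, weightedCoveringNumber, weightedCoveringNumber, ← mul_add,
    ← ENat.toENNReal_add]
  gcongr
  exact externalCoveringNumber_union_le _ A B

lemma weightedCoveringNumber_biUnion_le {ι : Type*} (s : ℝ) (I : Finset ι) (A : ι → Set X)
    (t : ℝ) :
    weightedCoveringNumber s (⋃ i ∈ I, A i) t ≤ ∑ i ∈ I, weightedCoveringNumber s (A i) t := by
  classical
  induction I using Finset.induction_on with
  | empty => simp [weightedCoveringNumber]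
  | insert a I ha ih =>
    rw [Finset.set_biUnion_insert, Finset.sum_insert ha]
    exact (weightedCoveringNumber_union_le s _ _ t).trans (add_le_add_right ih _)

lemma weightedCoveringNumber_image_le {ρ : ℝ≥0} (hρ : 0 < ρ) {f : X → Y}
    (hf : LipschitzWith ρ f) (s : ℝ) (A : Set X) (t : ℝ) :
    weightedCoveringNumber s (f '' A) t ≤
      ENNReal.ofReal ((ρ : ℝ) ^ s) * weightedCoveringNumber s A (t + Real.log ρ) := by
  have hρ' : (0 : ℝ) < ρ := hρ
  have hweight : Real.exp (-s * t) = (ρ : ℝ) ^ s * Real.exp (-s * (t + Real.log ρ)) := by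
    rw [Real.rpow_def_of_pos hρ', ← Real.exp_add]
    ring_nf
  have hscale : (Real.exp (-t)).toNNReal = ρ * (Real.exp (-(t + Real.log ρ))).toNNReal := by
    rw [neg_add, Real.exp_add, Real.exp_neg (Real.log ρ), Real.exp_log hρ',
      Real.toNNReal_mul (Real.exp_pos _).le, Real.toNNReal_inv, Real.toNNReal_coe,
      mul_left_comm, mul_inv_cancel₀ hρ.ne', mul_one]
  rw [weightedCoveringNumber, weightedCoveringNumber, hweight, hscale,
    ENNReal.ofReal_mul (by positivity), mul_assoc]
  gcongr
  exact externalCoveringNumber_image_le hf _ A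

lemma measurable_weightedCoveringNumber (s : ℝ) (A : Set X) :
    Measurable (weightedCoveringNumber s A) := by
  have hmono : Monotone fun t : ℝ =>
      (externalCoveringNumber (Real.exp (-t)).toNNReal A : ℝ≥0∞) := fun t u htu =>
    ENat.toENNReal_mono <| externalCoveringNumber_anti <|
      Real.toNNReal_mono <| Real.exp_le_exp.2 <| neg_le_neg htu
  exact (by fun_prop : Measurable fun t : ℝ => ENNReal.ofReal (Real.exp (-s * t))).mul
    hmono.measurable

end PseudoEMetric

lemma exists_weightedCoveringNumber_le [PseudoMetricSpace X] [ProperSpace X] {A : Set X}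
    (hA : Bornology.IsBounded A) (s T : ℝ) :
    ∃ M : ℝ≥0, ∀ t, |t| ≤ T → weightedCoveringNumber s A t ≤ M := by
  have hT : (Real.exp (-T)).toNNReal ≠ 0 := (Real.toNNReal_pos.2 (Real.exp_pos _)).ne'
  obtain ⟨N, hN⟩ := ENat.ne_top_iff_exists.1 (externalCoveringNumber_ne_top hA hT)
  refine ⟨(Real.exp (|s| * T)).toNNReal * N, fun t ht => ?_⟩
  have hexp : -s * t ≤ |s| * T := by
    calc -s * t ≤ |s| * |t| := by rw [← abs_neg s, ← abs_mul]; exact le_abs_self _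
      _ ≤ |s| * T := mul_le_mul_of_nonneg_left ht (abs_nonneg s)
  have hscale : (Real.exp (-T)).toNNReal ≤ (Real.exp (-t)).toNNReal :=
    Real.toNNReal_mono (Real.exp_le_exp.2 (neg_le_neg (le_of_abs_le ht)))
  calc weightedCoveringNumber s A t
      ≤ ENNReal.ofReal (Real.exp (|s| * T)) *
          (externalCoveringNumber (Real.exp (-T)).toNNReal A : ℝ≥0∞) := by
        rw [weightedCoveringNumber]
        gcongr
        exact externalCoveringNumber_anti hscale
    _ = ((Real.exp (|s| * T)).toNNReal * N : ℝ≥0) := by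
        rw [← hN, ENat.toENNReal_coe, ENNReal.ofReal, ENNReal.coe_mul, ENNReal.coe_natCast]

lemma setLIntegral_Ioi_weightedCoveringNumber_lt_top [PseudoMetricSpace X] [ProperSpace X]
    {A : Set X} (hA : Bornology.IsBounded A) {s : ℝ}
    (hint : ∫⁻ t in Ioi 0, weightedCoveringNumber s A t < ⊤) (a : ℝ) :
    ∫⁻ t in Ioi a, weightedCoveringNumber s A t < ⊤ := by
  obtain ⟨M, hM⟩ := exists_weightedCoveringNumber_le hA s |a|
  have hbdd : ∫⁻ t in Ioc a 0, weightedCoveringNumber s A t < ⊤ :=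
    setLIntegral_lt_top_of_le_nnreal measure_Ioc_lt_top.ne ⟨M, fun t ht => by
      refine hM t ?_
      rw [abs_of_nonpos ht.2, abs_of_nonpos (ht.1.le.trans ht.2)]
      exact neg_le_neg ht.1.le⟩
  calc ∫⁻ t in Ioi a, weightedCoveringNumber s A t
      ≤ ∫⁻ t in Ioc a 0 ∪ Ioi 0, weightedCoveringNumber s A t :=
        lintegral_mono_set fun t ht => (le_or_gt t 0).imp (fun h => ⟨ht, h⟩) id
    _ ≤ _ := lintegral_union_le _ _ _
    _ < ⊤ := ENNReal.add_lt_top.2 ⟨hbdd, hint⟩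

lemma setLIntegral_Ioi_weightedCoveringNumber_image_lt_top [PseudoMetricSpace X] [ProperSpace X]
    [PseudoMetricSpace Y] {A : Set X} (hA : Bornology.IsBounded A) {ρ : ℝ≥0} (hρ : 0 < ρ)
    {f : X → Y} (hf : LipschitzWith ρ f) {s : ℝ}
    (hint : ∫⁻ t in Ioi 0, weightedCoveringNumber s A t < ⊤) :
    ∫⁻ t in Ioi 0, weightedCoveringNumber s (f '' A) t < ⊤ := by
  have hshift : ∫⁻ t in Ioi 0, weightedCoveringNumber s A (t + Real.log ρ) < ⊤ := by
    have hpre : (· + Real.log ρ) ⁻¹' Ioi (Real.log ρ) = Ioi (0 : ℝ) := by ext t; simp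
    rw [← hpre, (measurePreserving_add_right volume (Real.log ρ)).setLIntegral_comp_preimage
      measurableSet_Ioi (measurable_weightedCoveringNumber s A)]
    exact setLIntegral_Ioi_weightedCoveringNumber_lt_top hA hint _
  calc ∫⁻ t in Ioi 0, weightedCoveringNumber s (f '' A) t
      ≤ ∫⁻ t in Ioi 0,
          ENNReal.ofReal ((ρ : ℝ) ^ s) * weightedCoveringNumber s A (t + Real.log ρ) :=
        lintegral_mono fun t => weightedCoveringNumber_image_le hρ hf s A t
    _ = ENNReal.ofReal ((ρ : ℝ) ^ s) *
          ∫⁻ t in Ioi 0, weightedCoveringNumber s A (t + Real.log ρ) :=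
        lintegral_const_mul' _ _ ENNReal.ofReal_ne_top
    _ < ⊤ := ENNReal.mul_lt_top ENNReal.ofReal_lt_top hshift

lemma ofReal_exp_mul_coveringNumber {d : ℕ} {A : Set (Pt d)} (hA : Bornology.IsBounded A)
    (s t : ℝ) :
    ENNReal.ofReal (Real.exp (-s * t) * (_root_.coveringNumber A (Real.exp (-t)) : ℝ)) =
      weightedCoveringNumber s A t := by
  have ht : (Real.exp (-t)).toNNReal ≠ 0 := (Real.toNNReal_pos.2 (Real.exp_pos _)).ne'
  rw [weightedCoveringNumber, ← coe_coveringNumber_eq_externalCoveringNumber hA ht,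
    Real.coe_toNNReal _ (Real.exp_pos _).le, ENNReal.ofReal_mul (Real.exp_pos _).le,
    ENNReal.ofReal_natCast, ENat.toENNReal_coe]

end WeightedCovering

section Renewal

open scoped NNReal ENNReal

lemma le_sum_iterate_add_iterate {M : Type*} [AddCommMonoid M] [Preorder M]
    [IsOrderedAddMonoid M] {T : M →+ M} (hT : Monotone T) {φ h : M} (hφ : φ ≤ h + T φ) (k : ℕ) :
    φ ≤ ∑ m ∈ Finset.range k, T^[m] h + T^[k] φ := by
  induction k with
  | zero => simp
  | succ k ih =>
    calc φ ≤ ∑ m ∈ Finset.range k, T^[m] h + T^[k] φ := ih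
      _ ≤ ∑ m ∈ Finset.range k, T^[m] h + T^[k] (h + T φ) :=
        add_le_add_right (hT.iterate k hφ) _
      _ = ∑ m ∈ Finset.range (k + 1), T^[m] h + T^[k + 1] φ := by
        rw [iterate_map_add, Finset.sum_range_succ, add_assoc, Function.iterate_succ_apply]

variable {V ι : Type*}

/-- The renewal operator of a finite directed multigraph: `P i` lists the edges issuing from the
vertex `i`, and the edge `e` leads to `τ e` with weight `p e` and delay `l e`. -/
def renewalOp (P : V → Finset ι) (τ : ι → V) (p : ι → ℝ≥0∞) (l : ι → ℝ) :
    (V → ℝ → ℝ≥0∞) →+ (V → ℝ → ℝ≥0∞) where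
  toFun f i t := ∑ e ∈ P i, p e * f (τ e) (t - l e)
  map_zero' := by ext; simp
  map_add' f g := by ext; simp [mul_add, Finset.sum_add_distrib]

variable {P : V → Finset ι} {τ : ι → V} {p : ι → ℝ≥0∞} {l : ι → ℝ}

lemma renewalOp_apply (f : V → ℝ → ℝ≥0∞) (i : V) (t : ℝ) :
    renewalOp P τ p l f i t = ∑ e ∈ P i, p e * f (τ e) (t - l e) := rfl

lemma renewalOp_monotone : Monotone (renewalOp P τ p l) := fun _ _ hfg _ _ =>
  Finset.sum_le_sum fun _ _ => mul_le_mul_right (hfg _ _) _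

lemma measurable_renewalOp {f : V → ℝ → ℝ≥0∞} (hf : ∀ i, Measurable (f i)) (i : V) :
    Measurable (renewalOp P τ p l f i) :=
  Finset.measurable_fun_sum _ fun e _ => ((hf (τ e)).comp (measurable_id.sub_const _)).const_mul _

lemma measurable_renewalOp_iterate {f : V → ℝ → ℝ≥0∞} (hf : ∀ i, Measurable (f i)) (m : ℕ)
    (i : V) : Measurable ((renewalOp P τ p l)^[m] f i) := by
  induction m generalizing i with
  | zero => exact hf i
  | succ m ih =>
    rw [Function.iterate_succ_apply']
    exact measurable_renewalOp ih i

lemma lintegral_renewalOp {f : V → ℝ → ℝ≥0∞} (hf : ∀ i, Measurable (f i)) (i : V) :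
    ∫⁻ t, renewalOp P τ p l f i t = ∑ e ∈ P i, p e * ∫⁻ t, f (τ e) t := by
  have hshift (e : ι) : Measurable fun t => f (τ e) (t - l e) :=
    (hf (τ e)).comp (measurable_id.sub_const _)
  simp only [renewalOp_apply]
  rw [lintegral_finsetSum _ fun e _ => (hshift e).const_mul _]
  refine Finset.sum_congr rfl fun e _ => ?_
  rw [lintegral_const_mul _ (hshift e), lintegral_sub_right_eq_self]

lemma lintegral_renewalOp_iterate_le {h : V → ℝ → ℝ≥0∞} (hh : ∀ i, Measurable (h i))
    {v : V → ℝ≥0∞} {θ R : ℝ≥0∞} (hsub : ∀ i, ∑ e ∈ P i, p e * v (τ e) ≤ θ * v i)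
    (hhv : ∀ i, ∫⁻ t, h i t ≤ R * v i) (m : ℕ) (i : V) :
    ∫⁻ t, (renewalOp P τ p l)^[m] h i t ≤ θ ^ m * (R * v i) := by
  induction m generalizing i with
  | zero => simpa using hhv i
  | succ m ih =>
    rw [Function.iterate_succ_apply', lintegral_renewalOp (measurable_renewalOp_iterate hh m)]
    calc ∑ e ∈ P i, p e * ∫⁻ t, (renewalOp P τ p l)^[m] h (τ e) t
        ≤ ∑ e ∈ P i, p e * (θ ^ m * (R * v (τ e))) := by gcongr with e; exact ih (τ e)
      _ = θ ^ m * R * ∑ e ∈ P i, p e * v (τ e) := by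
        rw [Finset.mul_sum]
        exact Finset.sum_congr rfl fun e _ => by ring
      _ ≤ θ ^ m * R * (θ * v i) := by gcongr; exact hsub i
      _ = θ ^ (m + 1) * (R * v i) := by ring

lemma renewalOp_iterate_eq_zero {c : ℝ} (hc : ∀ e, c ≤ l e) {f : V → ℝ → ℝ≥0∞}
    (hf : ∀ i, ∀ t ≤ 0, f i t = 0) (m : ℕ) (i : V) {t : ℝ} (ht : t ≤ m * c) :
    (renewalOp P τ p l)^[m] f i t = 0 := by
  induction m generalizing i t with
  | zero => exact hf i t (by simpa using ht)
  | succ m ih =>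
    rw [Function.iterate_succ_apply', renewalOp_apply]
    refine Finset.sum_eq_zero fun e _ => ?_
    rw [ih (τ e), mul_zero]
    push_cast at ht
    linarith [hc e]

lemma le_tsum_renewalOp_iterate [Finite ι] (hl : ∀ e, 0 < l e) {φ h : V → ℝ → ℝ≥0∞}
    (hφ0 : ∀ i, ∀ t ≤ 0, φ i t = 0) (hφ : φ ≤ h + renewalOp P τ p l φ) (i : V) (t : ℝ) :
    φ i t ≤ ∑' m, (renewalOp P τ p l)^[m] h i t := by
  obtain ⟨⟨c, hc0⟩, hc⟩ := Finite.exists_ge fun e => (⟨l e, hl e⟩ : Ioi (0 : ℝ))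
  obtain ⟨k, hk⟩ := exists_nat_ge (t / c)
  have hle := le_sum_iterate_add_iterate renewalOp_monotone hφ k i t
  have hzero : (renewalOp P τ p l)^[k] φ i t = 0 :=
    renewalOp_iterate_eq_zero (fun e => hc e) hφ0 k i ((div_le_iff₀ hc0).1 hk)
  rw [Pi.add_apply, Pi.add_apply, hzero, add_zero, Finset.sum_apply, Finset.sum_apply] at hle
  exact hle.trans (ENNReal.sum_le_tsum _)

lemma exists_lt_one_forall_le_mul [Finite V] {u v : V → ℝ≥0∞} (hv : ∀ i, v i ≠ ⊤)
    (huv : ∀ i, u i < v i) : ∃ θ < 1, ∀ i, u i ≤ θ * v i := by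
  have := Fintype.ofFinite V
  have hv0 i : v i ≠ 0 := (pos_of_gt (huv i)).ne'
  refine ⟨Finset.univ.sup fun i => u i / v i, ?_, fun i => ?_⟩
  · refine (Finset.sup_lt_iff (bot_lt_iff_ne_bot.2 one_ne_zero)).2 fun i _ => ?_
    rw [ENNReal.div_lt_iff (.inl (hv0 i)) (.inl (hv i)), one_mul]
    exact huv i
  · rw [← ENNReal.div_le_iff (hv0 i) (hv i)]
    exact Finset.le_sup (f := fun i => u i / v i) (Finset.mem_univ i)

lemma exists_forall_le_mul [Finite V] {u v : V → ℝ≥0∞} (hu : ∀ i, u i ≠ ⊤)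
    (hv0 : ∀ i, v i ≠ 0) (hv : ∀ i, v i ≠ ⊤) : ∃ R ≠ ⊤, ∀ i, u i ≤ R * v i := by
  have := Fintype.ofFinite V
  refine ⟨∑ i, u i / v i, ENNReal.sum_ne_top.2 fun i _ => ENNReal.div_ne_top (hu i) (hv0 i),
    fun i => ?_⟩
  rw [← ENNReal.div_le_iff (hv0 i) (hv i)]
  exact Finset.single_le_sum_of_canonicallyOrdered (f := fun i => u i / v i) (Finset.mem_univ i)

theorem lintegral_lt_top_of_le_add_renewalOp [Finite V] [Finite ι] (hl : ∀ e, 0 < l e)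
    {v : V → ℝ≥0∞} (hv : ∀ i, v i ≠ ⊤) (hsub : ∀ i, ∑ e ∈ P i, p e * v (τ e) < v i)
    {φ h : V → ℝ → ℝ≥0∞} (hh : ∀ i, Measurable (h i)) (hhint : ∀ i, ∫⁻ t, h i t ≠ ⊤)
    (hφ0 : ∀ i, ∀ t ≤ 0, φ i t = 0) (hφ : φ ≤ h + renewalOp P τ p l φ) (i : V) :
    ∫⁻ t, φ i t < ⊤ := by
  obtain ⟨θ, hθ, hsubθ⟩ := exists_lt_one_forall_le_mul hv hsub
  obtain ⟨R, hR, hhv⟩ :=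
    exists_forall_le_mul hhint (fun i => (pos_of_gt (hsub i)).ne') hv
  calc ∫⁻ t, φ i t ≤ ∫⁻ t, ∑' m, (renewalOp P τ p l)^[m] h i t :=
        lintegral_mono fun t => le_tsum_renewalOp_iterate hl hφ0 hφ i t
    _ = ∑' m, ∫⁻ t, (renewalOp P τ p l)^[m] h i t :=
        lintegral_tsum fun m => (measurable_renewalOp_iterate hh m i).aemeasurable
    _ ≤ ∑' m, θ ^ m * (R * v i) :=
        ENNReal.tsum_le_tsum fun m => lintegral_renewalOp_iterate_le hh hsubθ hhv m i
    _ = (1 - θ)⁻¹ * (R * v i) := by rw [ENNReal.tsum_mul_right, ENNReal.tsum_geometric]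
    _ < ⊤ := ENNReal.mul_lt_top (ENNReal.inv_lt_top.2 (tsub_pos_of_lt hθ))
        (ENNReal.mul_lt_top hR.lt_top (hv i).lt_top)

theorem setLIntegral_Ioi_lt_top_of_eventually_le_add_sum [Finite V] [Finite ι]
    (hl : ∀ e, 0 < l e) {v : V → ℝ≥0∞} (hv : ∀ i, v i ≠ ⊤)
    (hsub : ∀ i, ∑ e ∈ P i, p e * v (τ e) < v i)
    {φ ψ : V → ℝ → ℝ≥0∞} (hψ : ∀ i, Measurable (ψ i))
    (hψint : ∀ i, ∫⁻ t in Ioi 0, ψ i t < ⊤)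
    (hφbdd : ∀ i T, ∃ M : ℝ≥0, ∀ t ∈ Ioc 0 T, φ i t ≤ M)
    (hφ : ∀ i, ∀ᶠ t in atTop, φ i t ≤ ψ i t + ∑ e ∈ P i, p e * φ (τ e) (t - l e)) (i : V) :
    ∫⁻ t in Ioi 0, φ i t < ⊤ := by
  obtain ⟨T, hT⟩ := eventually_atTop.1 <| (eventually_all.2 hφ).and <|
    eventually_all.2 fun e => eventually_gt_atTop (l e)
  choose M hM using fun i => hφbdd i T
  let h : V → ℝ → ℝ≥0∞ := fun i t =>
    (Ioi 0).indicator (ψ i) t + (Ioc 0 T).indicator (fun _ => (M i : ℝ≥0∞)) t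
  rw [← lintegral_indicator measurableSet_Ioi]
  refine lintegral_lt_top_of_le_add_renewalOp (h := h) (φ := fun i => (Ioi 0).indicator (φ i))
    hl hv hsub (fun i => ?_) (fun i => ?_) (fun i t ht => ?_) (fun i t => ?_) i
  · exact ((hψ i).indicator measurableSet_Ioi).add (measurable_const.indicator measurableSet_Ioc)
  · rw [lintegral_add_left ((hψ i).indicator measurableSet_Ioi),
      lintegral_indicator measurableSet_Ioi, lintegral_indicator_const measurableSet_Ioc]
    exact ENNReal.add_ne_top.2
      ⟨(hψint i).ne, ENNReal.mul_ne_top ENNReal.coe_ne_top measure_Ioc_lt_top.ne⟩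
  · exact indicator_of_notMem (notMem_Ioi.2 ht) _
  · refine indicator_apply_le' (fun ht => ?_) (fun _ => zero_le)
    rw [Pi.add_apply, Pi.add_apply, renewalOp_apply]
    rcases le_or_gt t T with htT | htT
    · calc φ i t ≤ (Ioc 0 T).indicator (fun _ => (M i : ℝ≥0∞)) t := by
            rw [indicator_of_mem (show t ∈ Ioc 0 T from ⟨ht, htT⟩)]
            exact hM i t ⟨ht, htT⟩
        _ ≤ _ := le_add_self.trans le_self_add
    · obtain ⟨hrenew, hdelay⟩ := hT t htT.le
      calc φ i t ≤ ψ i t + ∑ e ∈ P i, p e * φ (τ e) (t - l e) := hrenew i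
        _ = (Ioi 0).indicator (ψ i) t +
              ∑ e ∈ P i, p e * (Ioi 0).indicator (φ (τ e)) (t - l e) := by
            simp only [indicator_of_mem ht, indicator_of_mem (mem_Ioi.2 (sub_pos.2 (hdelay _)))]
        _ ≤ _ := add_le_add_left le_self_add _

end Renewal

section SubinvariantVector

open scoped Matrix Matrix.Norms.Operator

variable {n : Type} [Fintype n] [DecidableEq n] {A : Matrix n n ℝ}

lemma matrixSpectralRadius_nonneg (A : Matrix n n ℝ) : 0 ≤ matrixSpectralRadius A := by
  refine Real.sSup_nonneg ?_
  rintro _ ⟨μ, -, rfl⟩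
  exact norm_nonneg μ

lemma norm_le_matrixSpectralRadius {μ : ℂ}
    (hμ : μ ∈ spectrum ℂ (A.map (fun a : ℝ => (a : ℂ)))) : ‖μ‖ ≤ matrixSpectralRadius A := by
  obtain ⟨R, hR⟩ := (spectrum.isBounded (𝕜 := ℂ) (A.map (fun a : ℝ => (a : ℂ)))).exists_norm_le
  refine le_csSup ⟨R, ?_⟩ ⟨μ, hμ, rfl⟩
  rintro _ ⟨ν, hν, rfl⟩
  exact hR ν hν

lemma spectralRadius_map_ofReal_le (A : Matrix n n ℝ) :
    spectralRadius ℂ (A.map (fun a : ℝ => (a : ℂ))) ≤ ENNReal.ofReal (matrixSpectralRadius A) := by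
  refine iSup₂_le fun μ hμ => ?_
  rw [← enorm_eq_nnnorm, ← ofReal_norm]
  exact ENNReal.ofReal_le_ofReal (norm_le_matrixSpectralRadius hμ)

lemma mulVec_one_le_norm_map_ofReal (A : Matrix n n ℝ) (i : n) :
    (A *ᵥ 1) i ≤ ‖A.map (fun a : ℝ => (a : ℂ))‖ := by
  have hcoe : ((A.map (fun a : ℝ => (a : ℂ))) *ᵥ 1) i = ((A *ᵥ 1) i : ℝ) := by
    simp [Matrix.mulVec, dotProduct]
  calc (A *ᵥ 1) i ≤ ‖((A.map (fun a : ℝ => (a : ℂ))) *ᵥ 1) i‖ := by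
        rw [hcoe, Complex.norm_real]
        exact le_abs_self _
    _ ≤ ‖A.map (fun a : ℝ => (a : ℂ))‖ * ‖(1 : n → ℂ)‖ :=
        (norm_le_pi_norm _ i).trans (Matrix.linfty_opNorm_mulVec _ _)
    _ ≤ ‖A.map (fun a : ℝ => (a : ℂ))‖ := by
        refine mul_le_of_le_one_right (norm_nonneg _) ?_
        exact (pi_norm_const_le (1 : ℂ)).trans norm_one.le

lemma exists_pow_mulVec_one_le {b : ℝ} (hb : matrixSpectralRadius A < b) :
    ∃ k ≠ 0, ∀ i, ((A ^ k) *ᵥ 1) i ≤ b ^ k := by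
  have hb0 : 0 < b := (matrixSpectralRadius_nonneg A).trans_lt hb
  set M : Matrix n n ℂ := A.map (fun a : ℝ => (a : ℂ))
  have : CompleteSpace (Matrix n n ℂ) := FiniteDimensional.complete ℂ _
  have hrad : spectralRadius ℂ M < ENNReal.ofReal b :=
    (spectralRadius_map_ofReal_le A).trans_lt ((ENNReal.ofReal_lt_ofReal_iff hb0).2 hb)
  obtain ⟨k, hk, hk0⟩ := (((spectrum.pow_norm_pow_one_div_tendsto_nhds_spectralRadius M).eventually
    (gt_mem_nhds hrad)).and (eventually_ne_atTop 0)).exists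
  have hMk : M ^ k = (A ^ k).map (fun a : ℝ => (a : ℂ)) :=
    (map_pow (Complex.ofRealHom.mapMatrix (m := n)) A k).symm
  refine ⟨k, hk0, fun i => (mulVec_one_le_norm_map_ofReal (A ^ k) i).trans ?_⟩
  have hroot : ‖M ^ k‖ ^ (1 / k : ℝ) ≤ b := ((ENNReal.ofReal_lt_ofReal_iff hb0).1 hk).le
  have hpow := pow_le_pow_left₀ (by positivity) hroot k
  rwa [one_div, Real.rpow_inv_natCast_pow (norm_nonneg _) hk0, hMk] at hpow

lemma exists_le_mulVec_le_of_pow_mulVec_le {B : Matrix n n ℝ} (hB : ∀ i j, 0 ≤ B i j)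
    {u : n → ℝ} (hu : 0 ≤ u) {k : ℕ} (hk : k ≠ 0) (hBk : (B ^ k) *ᵥ u ≤ u) :
    ∃ w, u ≤ w ∧ B *ᵥ w ≤ w := by
  have hpos (m : ℕ) : 0 ≤ (B ^ m) *ᵥ u := fun i =>
    Finset.sum_nonneg fun j _ => mul_nonneg (Matrix.pow_apply_nonneg hB m i j) (hu j)
  refine ⟨∑ m ∈ Finset.range k, (B ^ m) *ᵥ u, ?_, ?_⟩
  · simpa using Finset.single_le_sum (f := fun m => (B ^ m) *ᵥ u) (fun m _ => hpos m)
      (Finset.mem_range.2 (Nat.pos_of_ne_zero hk))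
  · have hstep : B *ᵥ ∑ m ∈ Finset.range k, (B ^ m) *ᵥ u =
        ∑ m ∈ Finset.range k, (B ^ (m + 1)) *ᵥ u := by
      simp only [Matrix.mulVec_sum, Matrix.mulVec_mulVec, ← pow_succ']
    have htelescope := (Finset.sum_range_succ' (fun m => (B ^ m) *ᵥ u) k).symm.trans
      (Finset.sum_range_succ (fun m => (B ^ m) *ᵥ u) k)
    rw [pow_zero, Matrix.one_mulVec] at htelescope
    rw [hstep]
    exact le_of_add_le_add_right (htelescope.trans_le (add_le_add_right hBk _))

lemma exists_mem_stdSimplex_mulVec_le_smul [Nonempty n] (hA : ∀ i j, 0 ≤ A i j) {b : ℝ}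
    (hb : matrixSpectralRadius A < b) : ∃ v ∈ stdSimplex ℝ n, A *ᵥ v ≤ b • v := by
  have hb0 : 0 < b := (matrixSpectralRadius_nonneg A).trans_lt hb
  obtain ⟨k, hk0, hk⟩ := exists_pow_mulVec_one_le hb
  obtain ⟨w, hw1, hw⟩ : ∃ w, 1 ≤ w ∧ (b⁻¹ • A) *ᵥ w ≤ w := by
    refine exists_le_mulVec_le_of_pow_mulVec_le (B := b⁻¹ • A)
      (fun i j => mul_nonneg (inv_nonneg.2 hb0.le) (hA i j)) zero_le_one hk0 fun i => ?_
    rw [smul_pow, Matrix.smul_mulVec, Pi.smul_apply, smul_eq_mul, inv_pow,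
      inv_mul_le_iff₀ (pow_pos hb0 k), Pi.one_apply, mul_one]
    exact hk i
  have hsum : 0 < ∑ i, w i :=
    Finset.sum_pos (fun i _ => one_pos.trans_le (hw1 i)) Finset.univ_nonempty
  refine ⟨(∑ i, w i)⁻¹ • w, ⟨fun i => ?_, ?_⟩, ?_⟩
  · exact mul_nonneg (inv_nonneg.2 hsum.le) (zero_le_one.trans (hw1 i))
  · simp only [Pi.smul_apply, smul_eq_mul, ← Finset.mul_sum]
    exact inv_mul_cancel₀ hsum.ne'
  · rw [Matrix.smul_mulVec, inv_smul_le_iff_of_pos hb0] at hw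
    rw [Matrix.mulVec_smul, smul_comm b]
    exact smul_le_smul_of_nonneg_left hw (inv_nonneg.2 hsum.le)

theorem exists_mem_stdSimplex_mulVec_le_matrixSpectralRadius_smul [Nonempty n]
    (hA : ∀ i j, 0 ≤ A i j) : ∃ v ∈ stdSimplex ℝ n, A *ᵥ v ≤ matrixSpectralRadius A • v := by
  set ρ := matrixSpectralRadius A
  have hb (m : ℕ) : ρ < ρ + 1 / (m + 1) := lt_add_of_pos_right _ (by positivity)
  choose v hv hAv using fun m : ℕ => exists_mem_stdSimplex_mulVec_le_smul hA (hb m)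
  obtain ⟨u, hu, φ, hφ, hlim⟩ := (isCompact_stdSimplex ℝ n).tendsto_subseq hv
  have hleft : Tendsto (fun m => A *ᵥ v (φ m)) atTop (𝓝 (A *ᵥ u)) :=
    ((continuous_const.matrix_mulVec continuous_id).tendsto u).comp hlim
  have hright : Tendsto (fun m => (ρ + 1 / ((φ m : ℝ) + 1)) • v (φ m)) atTop (𝓝 (ρ • u)) := by
    simpa using ((tendsto_one_div_add_atTop_nhds_zero_nat.comp hφ.tendsto_atTop).const_add
      ρ).smul hlim
  exact ⟨u, hu, le_of_tendsto_of_tendsto' hleft hright fun m => hAv (φ m)⟩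

end SubinvariantVector

section Similarity

variable {X Y : Type*}

lemma surjective_of_dist_eq_mul_s5 [NormedAddCommGroup X] [NormedSpace ℝ X] [StrictConvexSpace ℝ X]
    [FiniteDimensional ℝ X] {f : X → X} {ρ : ℝ} (hρ : 0 < ρ)
    (hf : ∀ x y, dist (f x) (f y) = ρ * dist x y) : Function.Surjective f := by
  have hiso : Isometry fun x => ρ⁻¹ • f x := Isometry.of_dist_eq fun x y => by
    rw [dist_smul₀, hf, Real.norm_of_nonneg (inv_nonneg.2 hρ.le), inv_mul_cancel_left₀ hρ.ne']
  intro y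
  have : Inhabited X := ⟨0⟩
  obtain ⟨x, hx⟩ :=
    (hiso.affineIsometryOfStrictConvexSpace.toAffineIsometryEquiv rfl).surjective (ρ⁻¹ • y)
  exact ⟨x, smul_right_injective X (inv_ne_zero hρ.ne') hx⟩

variable [NormedAddCommGroup X] [NormedSpace ℝ X] [FiniteDimensional ℝ X]

lemma exists_mem_frontier_dist_le {U : Set X} {y w : X} (hy : y ∈ closure U) (hw : w ∉ U) :
    ∃ p ∈ frontier U, dist y p ≤ dist y w := by
  by_cases hyU : y ∈ U
  · obtain ⟨p, hp, hdist⟩ :=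
      exists_mem_frontier_infDist_compl_eq_dist hyU (ne_univ_iff_exists_notMem U |>.2 ⟨w, hw⟩)
    exact ⟨p, hp, hdist ▸ infDist_le_dist_of_mem hw⟩
  · exact ⟨y, ⟨hy, fun h => hyU (interior_subset h)⟩, by simp⟩

lemma mem_cthickening_frontier_of_mapsTo [PseudoMetricSpace Y] [ProperSpace Y] {f : X → Y}
    {ρ : ℝ} (hρ : 0 < ρ) (hf : ∀ x y, dist (f x) (f y) = ρ * dist x y)
    (hsurj : Function.Surjective f) {U : Set X} {W : Set Y} (hW : IsOpen W) (hUW : MapsTo f U W)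
    {y : X} (hy : y ∈ closure U) {δ : ℝ} (hδ : 0 ≤ δ)
    (hfy : f y ∈ cthickening δ (frontier W)) : y ∈ cthickening (δ / ρ) (frontier U) := by
  rw [isClosed_frontier.cthickening_eq_biUnion_closedBall hδ, mem_iUnion₂] at hfy
  obtain ⟨q, hq, hqy⟩ := hfy
  obtain ⟨w, rfl⟩ := hsurj q
  have hw : w ∉ U := fun h => hW.inter_frontier_eq.subset ⟨hUW h, hq⟩
  obtain ⟨p, hp, hpy⟩ := exists_mem_frontier_dist_le hy hw
  refine mem_cthickening_of_dist_le y p _ _ hp (hpy.trans ?_)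
  rw [le_div_iff₀' hρ, ← hf]
  exact hqy

lemma exists_forall_disjoint_closedBall_cthickening_frontier {ι : Type*} [PseudoMetricSpace Y]
    [Finite ι] {U : ι → Set Y} (hU : ∀ i, IsOpen (U i)) {x : ι → Y} (hx : ∀ i, x i ∈ U i) :
    ∃ ρ > 0, ∀ i, Disjoint (closedBall (x i) ρ) (cthickening ρ (frontier (U i))) := by
  have hdisj (i : ι) : Disjoint {x i} (frontier (U i)) :=
    disjoint_singleton_left.2 fun h => (hU i).inter_frontier_eq.subset ⟨hx i, h⟩
  choose ρ hρ hρdisj using fun i =>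
    (hdisj i).exists_cthickenings isCompact_singleton isClosed_frontier
  have : Nonempty (Ioi (0 : ℝ)) := nonempty_Ioi.to_subtype
  obtain ⟨⟨ρ₀, hρ₀⟩, hle⟩ := Finite.exists_ge fun i => (⟨ρ i, hρ i⟩ : Ioi (0 : ℝ))
  refine ⟨ρ₀, hρ₀, fun i => ?_⟩
  rw [← cthickening_singleton (x i) hρ₀.le]
  exact (hρdisj i).mono (cthickening_mono (hle i) _) (cthickening_mono (hle i) _)

end Similarity

namespace MWGraph

open scoped Matrix

variable {d : ℕ} {V E F : Type} [Fintype V] [Fintype E] [Fintype F]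

lemma lipschitzWith_S (G : MWGraph d V E) (e : E) :
    LipschitzWith ⟨G.r e, (G.r_pos e).le⟩ (G.S e) :=
  LipschitzWith.of_dist_le_mul fun x y => (G.S_sim e x y).le

lemma infDist_S_le (G : MWGraph d V E) {e : E} {A B : Set (Pt d)} (hA : A.Nonempty)
    (hAB : MapsTo (G.S e) A B) (x : Pt d) : infDist (G.S e x) B ≤ G.r e * infDist x A := by
  rw [← div_le_iff₀' (G.r_pos e), le_infDist hA]
  intro y hy
  rw [div_le_iff₀' (G.r_pos e), ← G.S_sim]
  exact infDist_le_dist_of_mem (hAB hy)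

-- The largest distance `M` from a point of `KC` to `B` satisfies `M ≤ r e * M` for some edge `e`.
lemma IsInhomAttractor.subset_of_mapsTo {G : MWGraph d V E} {C KC : V → Set (Pt d)}
    (hKC : G.IsInhomAttractor C KC) {B : V → Set (Pt d)} (hB : ∀ i, IsClosed (B i))
    (hBne : ∀ i, (B i).Nonempty) (hSB : ∀ e, MapsTo (G.S e) (B (G.term e)) (B (G.init e)))
    (hCB : ∀ i, C i ⊆ B i) (i : V) : KC i ⊆ B i := by
  obtain ⟨hcompact, hne, hfix⟩ := hKC
  choose x hx hmax using fun j =>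
    (hcompact j).exists_isMaxOn (hne j) (continuous_infDist_pt (B j)).continuousOn
  have : Nonempty V := ⟨i⟩
  obtain ⟨j, hj⟩ := Finite.exists_max fun j => infDist (x j) (B j)
  set M := infDist (x j) (B j)
  have hle (k : V) (y : Pt d) (hy : y ∈ KC k) : infDist y (B k) ≤ M := (hmax k hy).trans (hj k)
  have hM : M ≤ 0 := by
    rcases hfix j ▸ hx j with h | h
    · obtain ⟨e, rfl, y, hy, hyx⟩ := mem_iUnion₂.1 h
      have hcontr : M ≤ G.r e * M := by
        calc M = infDist (G.S e y) (B (G.init e)) := by rw [hyx]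
          _ ≤ G.r e * infDist y (B (G.term e)) := G.infDist_S_le (hBne _) (hSB e) y
          _ ≤ G.r e * M := mul_le_mul_of_nonneg_left (hle _ y hy) (G.r_pos e).le
      nlinarith [G.r_lt_one e]
    · exact (infDist_zero_of_mem (hCB j h)).le
  intro y hy
  rw [(hB i).mem_iff_infDist_zero (hBne i)]
  exact le_antisymm ((hle i y hy).trans hM) infDist_nonneg

variable [DecidableEq V]

/-- The set `E_i` of edges issuing from the vertex `i`. -/
def outEdges (G : MWGraph d V E) (i : V) : Finset E := {e | G.init e = i}

@[simp]
lemma mem_outEdges {G : MWGraph d V E} {i : V} {e : E} : e ∈ G.outEdges i ↔ G.init e = i := by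
  simp [outEdges]

section Subinvariant

variable {G : MWGraph d V E} {s : ℝ}

lemma Amatrix_mulVec (G : MWGraph d V E) (s : ℝ) (v : V → ℝ) (i : V) :
    (G.Amatrix s *ᵥ v) i = ∑ e ∈ G.outEdges i, G.r e ^ s * v (G.term e) := by
  simp only [Matrix.mulVec, dotProduct, Amatrix, Matrix.of_apply, Finset.sum_mul, outEdges,
    Finset.sum_filter]
  rw [Finset.sum_comm]
  refine Finset.sum_congr rfl fun e _ => ?_
  by_cases h : G.init e = i <;> simp [h, ite_mul]

lemma pos_of_isPathFrom {v : V → ℝ} (hv : ∀ i, 0 ≤ v i) (hAv : G.Amatrix s *ᵥ v ≤ v) {i : V}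
    {γ : List E} (hγ : G.IsPathFrom i γ) (hend : 0 < v (G.pathTerm i γ)) : 0 < v i := by
  induction γ generalizing i with
  | nil => exact hend
  | cons e γ ih =>
    obtain ⟨rfl, hγ⟩ := hγ
    have hweight (e' : E) : 0 ≤ G.r e' ^ s * v (G.term e') :=
      mul_nonneg (Real.rpow_nonneg (G.r_pos e').le s) (hv _)
    calc 0 < G.r e ^ s * v (G.term e) := mul_pos (Real.rpow_pos_of_pos (G.r_pos e) s) (ih hγ hend)
      _ ≤ ∑ e' ∈ G.outEdges (G.init e), G.r e' ^ s * v (G.term e') :=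
        Finset.single_le_sum (f := fun e' => G.r e' ^ s * v (G.term e'))
          (fun e' _ => hweight e') (mem_outEdges.2 rfl)
      _ ≤ v (G.init e) := by rw [← Amatrix_mulVec]; exact hAv _

lemma StronglyConnected.exists_pos_mulVec_le (hG : G.StronglyConnected)
    (hs : matrixSpectralRadius (G.Amatrix s) ≤ 1) :
    ∃ v : V → ℝ, (∀ i, 0 < v i) ∧ G.Amatrix s *ᵥ v ≤ v := by
  rcases isEmpty_or_nonempty V with hV | hV
  · exact ⟨0, isEmptyElim, isEmptyElim⟩
  have hA (i j : V) : 0 ≤ G.Amatrix s i j := Finset.sum_nonneg fun e _ => by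
    split_ifs <;> positivity [G.r_pos e]
  obtain ⟨v, ⟨hv0, hv1⟩, hAv⟩ := exists_mem_stdSimplex_mulVec_le_matrixSpectralRadius_smul hA
  have hAv' : G.Amatrix s *ᵥ v ≤ v := fun i => (hAv i).trans (mul_le_of_le_one_left (hv0 i) hs)
  obtain ⟨j, -, hj⟩ := Finset.exists_lt_of_sum_lt (s := Finset.univ) (f := 0) (g := v)
    (by simp [hv1])
  refine ⟨v, fun i => ?_, hAv'⟩
  obtain ⟨γ, -, hγ, rfl⟩ := hG i j
  exact pos_of_isPathFrom hv0 hAv' hγ hj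

end Subinvariant

/-- The graph whose edges are the pairs of an edge of `G` followed by an edge of `H`, with the
composed similarities. -/
def comp (G : MWGraph d V E) (H : MWGraph d V F) (hX : H.X = G.X) :
    MWGraph d V (Σ e : E, {f : F // H.init f = G.term e}) where
  init p := G.init p.1
  term p := H.term p.2
  X := G.X
  S p := G.S p.1 ∘ H.S p.2
  r p := G.r p.1 * H.r p.2
  X_nonempty := G.X_nonempty
  X_compact := G.X_compact
  X_regular := G.X_regular
  r_pos p := mul_pos (G.r_pos _) (H.r_pos _)
  r_lt_one p := mul_lt_one_of_nonneg_of_lt_one_left (G.r_pos _).le (G.r_lt_one _) (H.r_lt_one _).le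
  S_maps p := by
    have hf := H.S_maps p.2
    rw [p.2.2, hX] at hf
    exact (G.S_maps p.1).comp hf
  S_sim p x y := by simp only [Function.comp_apply, G.S_sim, H.S_sim, mul_assoc]

/-- The Hutchinson operator `A ↦ (⋃_{e ∈ E_i} S_e (A (term e)))_i`, whose fixed point is the
attractor of `G`. -/
def hutchinson (G : MWGraph d V E) (A : V → Set (Pt d)) (i : V) : Set (Pt d) :=
  ⋃ e ∈ G.outEdges i, G.S e '' A (G.term e)

lemma hutchinson_sup (G : MWGraph d V E) (A B : V → Set (Pt d)) :
    G.hutchinson (A ⊔ B) = G.hutchinson A ⊔ G.hutchinson B := by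
  funext i
  simp only [hutchinson, Pi.sup_apply, sup_eq_union, image_union, iUnion_union_distrib]

lemma lintegral_hutchinson_lt_top (G : MWGraph d V E) {s : ℝ}
    {A : V → Set (Pt d)} (hA : ∀ i, Bornology.IsBounded (A i))
    (hint : ∀ i, ∫⁻ t in Ioi 0, weightedCoveringNumber s (A i) t < ⊤) (i : V) :
    ∫⁻ t in Ioi 0, weightedCoveringNumber s (G.hutchinson A i) t < ⊤ := by
  calc ∫⁻ t in Ioi 0, weightedCoveringNumber s (G.hutchinson A i) t
      ≤ ∫⁻ t in Ioi 0, ∑ e ∈ G.outEdges i, weightedCoveringNumber s (G.S e '' A (G.term e)) t :=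
        lintegral_mono fun t => weightedCoveringNumber_biUnion_le s _ _ t
    _ = ∑ e ∈ G.outEdges i, ∫⁻ t in Ioi 0, weightedCoveringNumber s (G.S e '' A (G.term e)) t :=
        lintegral_finsetSum _ fun e _ => measurable_weightedCoveringNumber s _
    _ < ⊤ := ENNReal.sum_lt_top.2 fun e _ =>
        setLIntegral_Ioi_weightedCoveringNumber_image_lt_top (hA _) (G.r_pos e)
          (G.lipschitzWith_S e) (hint _)

section Comp

variable (G : MWGraph d V E) (H : MWGraph d V F) (hX : H.X = G.X)

lemma hutchinson_comp (A : V → Set (Pt d)) :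
    (G.comp H hX).hutchinson A = G.hutchinson (H.hutchinson A) := by
  funext i
  simp only [hutchinson, mem_outEdges, comp, image_iUnion, image_image, iUnion_sigma,
    iUnion_subtype, Function.comp_apply]
  exact iUnion_congr fun e => by by_cases h : G.init e = i <;> simp [h]

lemma sum_outEdges_comp (g : E → F → ℝ) (i : V) :
    ∑ p ∈ (G.comp H hX).outEdges i, g p.1 p.2 =
      ∑ e ∈ G.outEdges i, ∑ f ∈ H.outEdges (G.term e), g e f := by
  have houtEdges : (G.comp H hX).outEdges i = (G.outEdges i).sigma fun _ => Finset.univ := by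
    ext p
    simp [comp]
  rw [houtEdges, Finset.sum_sigma]
  exact Finset.sum_congr rfl fun e _ => (Finset.sum_subtype _ (by simp) (g e)).symm

end Comp

/-- The data from which the renewal inequality for the boundary covering numbers is derived: the
open sets `U`, the attractors `K` and `KC`, a subinvariant vector `v`, and condensation sets `C`
with integrable covering numbers. Strong connectedness, which need not survive composition,
enters only through the vector `v`. -/
structure IsRenewalData (G : MWGraph d V E) (s : ℝ) (v : V → ℝ) (U K C KC : V → Set (Pt d)) :
    Prop where
  mapsTo : ∀ e, MapsTo (G.S e) (U (G.term e)) (U (G.init e))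
  attractor_eq : K = G.hutchinson K
  inhomAttractor_eq : KC = G.hutchinson KC ⊔ C
  sum_le : ∀ i, ∑ e ∈ G.outEdges i, G.r e ^ s * v (G.term e) ≤ v i
  lintegral_lt_top : ∀ i, ∫⁻ t in Ioi 0, weightedCoveringNumber s (C i) t < ⊤

namespace IsRenewalData

variable {G : MWGraph d V E} {H : MWGraph d V F} {s : ℝ} {v : V → ℝ}
  {U K C C' KC : V → Set (Pt d)}

lemma comp (hG : G.IsRenewalData s v U K C KC) (hH : H.IsRenewalData s v U K C' KC)
    (hX : H.X = G.X) (hKC : ∀ i, Bornology.IsBounded (KC i)) :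
    (G.comp H hX).IsRenewalData s v U K (G.hutchinson C' ⊔ C) KC where
  mapsTo p := by
    have hf := hH.mapsTo p.2
    rw [p.2.2] at hf
    exact (hG.mapsTo p.1).comp hf
  attractor_eq := by rw [hutchinson_comp, ← hH.attractor_eq, ← hG.attractor_eq]
  inhomAttractor_eq := by
    rw [hutchinson_comp, ← sup_assoc, ← hutchinson_sup, ← hH.inhomAttractor_eq,
      ← hG.inhomAttractor_eq]
  sum_le i := by
    have hterm (e : E) (f : F) : (G.r e * H.r f) ^ s * v (H.term f) =
        G.r e ^ s * (H.r f ^ s * v (H.term f)) := by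
      rw [Real.mul_rpow (G.r_pos e).le (H.r_pos f).le, mul_assoc]
    calc ∑ p ∈ (G.comp H hX).outEdges i, (G.r p.1 * H.r p.2) ^ s * v (H.term p.2)
        = ∑ e ∈ G.outEdges i, G.r e ^ s *
            ∑ f ∈ H.outEdges (G.term e), H.r f ^ s * v (H.term f) := by
          rw [sum_outEdges_comp G H hX fun e f => (G.r e * H.r f) ^ s * v (H.term f)]
          simp only [hterm, Finset.mul_sum]
      _ ≤ ∑ e ∈ G.outEdges i, G.r e ^ s * v (G.term e) := Finset.sum_le_sum fun e _ =>
          mul_le_mul_of_nonneg_left (hH.sum_le _) (Real.rpow_nonneg (G.r_pos e).le s)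
      _ ≤ v i := hG.sum_le i
  lintegral_lt_top i := by
    have hC' (j : V) : Bornology.IsBounded (C' j) :=
      (hKC j).subset (by rw [hH.inhomAttractor_eq]; exact le_sup_right (a := H.hutchinson KC j))
    have hint := lintegral_hutchinson_lt_top G hC' hH.lintegral_lt_top i
    calc ∫⁻ t in Ioi 0, weightedCoveringNumber s ((G.hutchinson C' ⊔ C) i) t
        ≤ ∫⁻ t in Ioi 0, (weightedCoveringNumber s (G.hutchinson C' i) t +
            weightedCoveringNumber s (C i) t) :=
          lintegral_mono fun t => weightedCoveringNumber_union_le s _ _ t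
      _ = _ := lintegral_add_left (measurable_weightedCoveringNumber s _) _
      _ < ⊤ := ENNReal.add_lt_top.2 ⟨hint, hG.lintegral_lt_top i⟩

lemma exists_forall_r_le_pow (hG : G.IsRenewalData s v U K C KC)
    (hKC : ∀ i, Bornology.IsBounded (KC i)) {b : ℝ} (hb : ∀ e, G.r e ≤ b) (n : ℕ) :
    ∃ (F : Type) (_ : Fintype F) (H : MWGraph d V F) (C' : V → Set (Pt d)),
      H.X = G.X ∧ H.IsRenewalData s v U K C' KC ∧ ∀ f, H.r f ≤ b ^ (n + 1) := by
  induction n with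
  | zero => exact ⟨E, _, G, C, rfl, hG, by simpa using hb⟩
  | succ n ih =>
    obtain ⟨F, _, H, C', hX, hH, hr⟩ := ih
    refine ⟨_, _, G.comp H hX, _, rfl, hG.comp hH hX hKC, fun p => ?_⟩
    rw [pow_succ']
    exact mul_le_mul (hb p.1) (hr p.2) (H.r_pos p.2).le ((G.r_pos p.1).le.trans (hb p.1))

lemma exists_forall_r_lt (hG : G.IsRenewalData s v U K C KC)
    (hKC : ∀ i, Bornology.IsBounded (KC i)) {ε : ℝ} (hε : 0 < ε) :
    ∃ (F : Type) (_ : Fintype F) (H : MWGraph d V F) (C' : V → Set (Pt d)),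
      H.IsRenewalData s v U K C' KC ∧ ∀ f, H.r f < ε := by
  have : Nonempty (Ioo (0 : ℝ) 1) := (nonempty_Ioo.2 one_pos).to_subtype
  obtain ⟨⟨b, hb0, hb1⟩, hb⟩ := Finite.exists_le
    fun e => (⟨G.r e, G.r_pos e, G.r_lt_one e⟩ : Ioo (0 : ℝ) 1)
  obtain ⟨n, hn⟩ := exists_pow_lt_of_lt_one hε hb1
  obtain ⟨F, _, H, C', -, hH, hr⟩ := hG.exists_forall_r_le_pow hKC hb n
  refine ⟨F, _, H, C', hH, fun f => (hr f).trans_lt ?_⟩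
  exact (pow_le_pow_of_le_one hb0.le hb1.le n.le_succ).trans_lt hn

lemma exists_disjoint_image_cthickening (hG : G.IsRenewalData s v U K C KC) {ρ D : ℝ}
    (hD : ∀ i, ∀ y ∈ KC i, ∀ z ∈ K i, dist y z ≤ D) (hr : ∀ e, G.r e * D ≤ ρ) {i : V} {x : Pt d}
    (hx : x ∈ K i) (hdisj : Disjoint (closedBall x ρ) (cthickening ρ (frontier (U i)))) :
    ∃ e ∈ G.outEdges i, Disjoint (G.S e '' KC (G.term e)) (cthickening ρ (frontier (U i))) := by
  rw [hG.attractor_eq] at hx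
  obtain ⟨e, he, z, hz, rfl⟩ := mem_iUnion₂.1 hx
  refine ⟨e, he, hdisj.mono_left ?_⟩
  rintro _ ⟨y, hy, rfl⟩
  rw [mem_closedBall, G.S_sim]
  exact (mul_le_mul_of_nonneg_left (hD _ y hy z hz) (G.r_pos e).le).trans (hr e)

section EraseEdge

variable [DecidableEq E]

lemma inter_cthickening_frontier_subset (hG : G.IsRenewalData s v U K C KC)
    (hU : ∀ i, IsOpen (U i)) (hKCU : ∀ i, KC i ⊆ closure (U i)) {i : V} {η : E} {ρ δ : ℝ}
    (hη : Disjoint (G.S η '' KC (G.term η)) (cthickening ρ (frontier (U i))))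
    (hδ : 0 ≤ δ) (hδρ : δ ≤ ρ) :
    KC i ∩ cthickening δ (frontier (U i)) ⊆ C i ∪ ⋃ e ∈ (G.outEdges i).erase η,
      G.S e '' (KC (G.term e) ∩ cthickening (δ / G.r e) (frontier (U (G.term e)))) := by
  rintro _ ⟨hy, hδy⟩
  rw [hG.inhomAttractor_eq] at hy
  rcases hy with hy | hy
  · obtain ⟨e, he, y, hyKC, rfl⟩ := mem_iUnion₂.1 hy
    have heη : e ≠ η := by
      rintro rfl
      exact disjoint_left.1 hη (mem_image_of_mem _ hyKC) (cthickening_mono hδρ _ hδy)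
    refine .inr <| mem_biUnion (Finset.mem_erase.2 ⟨heη, he⟩) ⟨y, ⟨hyKC, ?_⟩, rfl⟩
    rw [← mem_outEdges.1 he] at hδy
    exact mem_cthickening_frontier_of_mapsTo (G.r_pos e) (G.S_sim e)
      (surjective_of_dist_eq_mul_s5 (G.r_pos e) (G.S_sim e)) (hU _) (hG.mapsTo e) (hKCU _ hyKC) hδ hδy
  · exact .inl hy

lemma boundaryCoveringNumber_le (hG : G.IsRenewalData s v U K C KC)
    (hU : ∀ i, IsOpen (U i)) (hKCU : ∀ i, KC i ⊆ closure (U i)) {i : V} {η : E} {ρ t : ℝ}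
    (hη : Disjoint (G.S η '' KC (G.term η)) (cthickening ρ (frontier (U i))))
    (ht : Real.exp (-t) ≤ ρ) :
    boundaryCoveringNumber s (KC i) (U i) t ≤ weightedCoveringNumber s (C i) t +
      ∑ e ∈ (G.outEdges i).erase η, ENNReal.ofReal (G.r e ^ s) *
        boundaryCoveringNumber s (KC (G.term e)) (U (G.term e)) (t - -Real.log (G.r e)) := by
  have hscale (e : E) : Real.exp (-t) / G.r e = Real.exp (-(t + Real.log (G.r e))) := by
    rw [neg_add, Real.exp_add, Real.exp_neg (Real.log _), Real.exp_log (G.r_pos e), div_eq_mul_inv]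
  calc boundaryCoveringNumber s (KC i) (U i) t
      ≤ weightedCoveringNumber s (C i ∪ ⋃ e ∈ (G.outEdges i).erase η, G.S e '' (KC (G.term e) ∩
          cthickening (Real.exp (-t) / G.r e) (frontier (U (G.term e))))) t :=
        weightedCoveringNumber_mono <|
          hG.inter_cthickening_frontier_subset hU hKCU hη (Real.exp_pos _).le ht
    _ ≤ weightedCoveringNumber s (C i) t + ∑ e ∈ (G.outEdges i).erase η,
          weightedCoveringNumber s (G.S e '' (KC (G.term e) ∩
            cthickening (Real.exp (-t) / G.r e) (frontier (U (G.term e))))) t :=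
        (weightedCoveringNumber_union_le s _ _ t).trans <|
          add_le_add_right (weightedCoveringNumber_biUnion_le s _ _ t) _
    _ ≤ _ := by
        gcongr with e
        rw [boundaryCoveringNumber, sub_neg_eq_add, ← hscale]
        exact weightedCoveringNumber_image_le (G.r_pos e) (G.lipschitzWith_S e) s _ t

lemma sum_erase_lt (hG : G.IsRenewalData s v U K C KC) (hv : ∀ i, 0 < v i) {i : V} {η : E}
    (hη : η ∈ G.outEdges i) :
    ∑ e ∈ (G.outEdges i).erase η, ENNReal.ofReal (G.r e ^ s) * ENNReal.ofReal (v (G.term e)) <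
      ENNReal.ofReal (v i) := by
  have hterm (e : E) : 0 < G.r e ^ s * v (G.term e) :=
    mul_pos (Real.rpow_pos_of_pos (G.r_pos e) s) (hv _)
  simp only [← ENNReal.ofReal_mul (Real.rpow_nonneg (G.r_pos _).le s)]
  rw [← ENNReal.ofReal_sum_of_nonneg fun e _ => (hterm e).le, ENNReal.ofReal_lt_ofReal_iff (hv i)]
  exact (Finset.sum_erase_lt_of_pos hη (hterm η)).trans_le (hG.sum_le i)

end EraseEdge

lemma setLIntegral_boundaryCoveringNumber_lt_top_of_mul_le (hG : G.IsRenewalData s v U K C KC)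
    (hv : ∀ i, 0 < v i) (hU : ∀ i, IsOpen (U i)) (hKCU : ∀ i, KC i ⊆ closure (U i))
    (hKC : ∀ i, Bornology.IsBounded (KC i)) {ρ D : ℝ} (hρ : 0 < ρ)
    (hD : ∀ i, ∀ y ∈ KC i, ∀ z ∈ K i, dist y z ≤ D) (hr : ∀ e, G.r e * D ≤ ρ) {x : V → Pt d}
    (hx : ∀ i, x i ∈ K i)
    (hdisj : ∀ i, Disjoint (closedBall (x i) ρ) (cthickening ρ (frontier (U i)))) (i : V) :
    ∫⁻ t in Ioi 0, boundaryCoveringNumber s (KC i) (U i) t < ⊤ := by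
  classical
  choose η hη hηdisj using fun i => hG.exists_disjoint_image_cthickening hD hr (hx i) (hdisj i)
  refine setLIntegral_Ioi_lt_top_of_eventually_le_add_sum (P := fun i => (G.outEdges i).erase (η i))
    (φ := fun i => boundaryCoveringNumber s (KC i) (U i))
    (fun e => neg_pos.2 (Real.log_neg (G.r_pos e) (G.r_lt_one e)))
    (fun i => ENNReal.ofReal_ne_top) (fun i => hG.sum_erase_lt hv (hη i))
    (fun i => measurable_weightedCoveringNumber s (C i)) hG.lintegral_lt_top (fun i T => ?_)
    (fun i => ?_) i
  · obtain ⟨M, hM⟩ := exists_weightedCoveringNumber_le (hKC i) s T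
    exact ⟨M, fun t ht => (weightedCoveringNumber_mono inter_subset_left).trans <|
      hM t (by rw [abs_of_pos ht.1]; exact ht.2)⟩
  · have hsmall : ∀ᶠ t in atTop, Real.exp (-t) ≤ ρ :=
      Real.tendsto_exp_neg_atTop_nhds_zero.eventually_le_const hρ
    filter_upwards [hsmall] with t ht using hG.boundaryCoveringNumber_le hU hKCU (hηdisj i) ht

theorem setLIntegral_boundaryCoveringNumber_lt_top (hG : G.IsRenewalData s v U K C KC)
    (hv : ∀ i, 0 < v i) (hU : ∀ i, IsOpen (U i)) (hUK : ∀ i, (U i ∩ K i).Nonempty)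
    (hKCU : ∀ i, KC i ⊆ closure (U i)) (hK : ∀ i, Bornology.IsBounded (K i))
    (hKC : ∀ i, Bornology.IsBounded (KC i)) (i : V) :
    ∫⁻ t in Ioi 0, boundaryCoveringNumber s (KC i) (U i) t < ⊤ := by
  choose x hxU hxK using hUK
  obtain ⟨ρ, hρ, hdisj⟩ := exists_forall_disjoint_closedBall_cthickening_frontier hU hxU
  obtain ⟨D, hD⟩ := isBounded_iff.1 <| Bornology.isBounded_iUnion.2 fun j => (hKC j).union (hK j)
  have hD0 : 0 < max D 1 := lt_max_of_lt_right one_pos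
  have hKCK (j : V) (y : Pt d) (hy : y ∈ KC j) (z : Pt d) (hz : z ∈ K j) : dist y z ≤ max D 1 :=
    le_max_of_le_left (hD (mem_iUnion_of_mem j (.inl hy)) (mem_iUnion_of_mem j (.inr hz)))
  obtain ⟨F, _, H, C', hH, hr⟩ := hG.exists_forall_r_lt hKC (div_pos hρ hD0)
  exact hH.setLIntegral_boundaryCoveringNumber_lt_top_of_mul_le hv hU hKCU hKC hρ
    hKCK (fun f => (le_div_iff₀ hD0).1 (hr f).le) hxK hdisj i

end IsRenewalData

end MWGraph

theorem stmt5_general {d : ℕ} {V E : Type} [Fintype V] [Fintype E] [DecidableEq V]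
    (G : MWGraph d V E) (hSC : G.StronglyConnected) (C K KC U : V → Set (Pt d))
    (hK : G.IsAttractor K) (hKC : G.IsInhomAttractor C KC) (hU : ∀ i, IsOpen (U i))
    (hSU : ∀ e, MapsTo (G.S e) (U (G.term e)) (U (G.init e)))
    (hUK : ∀ i, (U i ∩ K i).Nonempty) (hCU : ∀ i, C i ⊆ closure (U i))
    (s : ℝ) (hs : matrixSpectralRadius (G.Amatrix s) ≤ 1)
    (hint : ∀ i, ∫⁻ t in Ioi (0 : ℝ),
      ENNReal.ofReal (Real.exp (-s * t) * (_root_.coveringNumber (C i) (Real.exp (-t)) : ℝ)) < ⊤)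
    (i : V) :
    ∫⁻ t in Ioi (0 : ℝ), ENNReal.ofReal (Real.exp (-s * t) *
      (_root_.coveringNumber (KC i ∩ cthickening (Real.exp (-t)) (frontier (U i)))
        (Real.exp (-t)) : ℝ)) < ⊤ := by
  have hKCbdd (j : V) : Bornology.IsBounded (KC j) := (hKC.1 j).isBounded
  have hCKC (j : V) : C j ⊆ KC j := by
    rw [hKC.2.2 j]
    exact subset_union_right
  have hKCU (j : V) : KC j ⊆ closure (U j) :=
    hKC.subset_of_mapsTo (fun _ => isClosed_closure)
      (fun j => ((hUK j).mono inter_subset_left).closure) (fun e =>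
        (hSU e).closure (G.lipschitzWith_S e).continuous) hCU j
  obtain ⟨v, hv, hAv⟩ := hSC.exists_pos_mulVec_le hs
  have hG : G.IsRenewalData s v U K C KC :=
    { mapsTo := hSU
      attractor_eq := funext fun j => by simpa [MWGraph.hutchinson] using hK.2.2 j
      inhomAttractor_eq := funext fun j => by simpa [MWGraph.hutchinson] using hKC.2.2 j
      sum_le := fun j => G.Amatrix_mulVec s v j ▸ hAv j
      lintegral_lt_top := fun j => by
        simpa only [ofReal_exp_mul_coveringNumber ((hKCbdd j).subset (hCKC j))] using hint j }
  simp only [ofReal_exp_mul_coveringNumber ((hKCbdd i).subset inter_subset_left)]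
  exact hG.setLIntegral_boundaryCoveringNumber_lt_top hv hU hUK hKCU
    (fun j => (hK.1 j).isBounded) hKCbdd i

theorem stmt5 {d : ℕ} {V E : Type} [Fintype V] [Fintype E] [DecidableEq V]
    (G : MWGraph d V E) (hSC : G.StronglyConnected)
    (C K KC U : V → Set (Pt d))
    (hC : G.IsCondensation C) (hK : G.IsAttractor K) (hKC : G.IsInhomAttractor C KC)
    (hU : G.IsOSCWith U) (hUK : ∀ i, (U i ∩ K i).Nonempty)
    (hCU : ∀ i, C i ⊆ closure (U i))
    (s0 : ℝ) (hs0 : IsS0 G s0)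
    (hint : ∀ i : V, ∫⁻ t in Set.Ioi (0 : ℝ),
      ENNReal.ofReal (Real.exp (-s0 * t) * (coveringNumber (C i) (Real.exp (-t)) : ℝ)) < ⊤)
 :
    ∀ i : V, ∫⁻ t in Set.Ioi (0 : ℝ), ENNReal.ofReal (Real.exp (-s0 * t) *
      (coveringNumber (KC i ∩ Metric.cthickening (Real.exp (-t)) (frontier (U i)))
        (Real.exp (-t)) : ℝ)) < ⊤ := by
  have hSU (e : E) : MapsTo (G.S e) (U (G.term e)) (U (G.init e)) := fun x hx =>
    hU.2.2.2.2.1 _ (mem_biUnion rfl (mem_image_of_mem _ hx))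
  exact stmt5_general G hSC C K KC U hK hKC hU.2.1 hSU hUK hCU s0 hs0.2.le hint
end
end
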